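/- arXiv:2504.17909 — 2 statements merged into one kernel-verified Lean document; each statement's English description precedes it below -/
import Mathlib

section
/- Let ℓ, k ≥ 0 be integers and D a reduced effective divisor on P¹ such that ℓ ≥ 3k and ℓ ≥ deg D (the small range). Then Φ^{ir}(ℓ,k,D) = [ q^{4ℓ−6k+4−deg D} − q^{3ℓ−3k+3} if ℓ−3k ≥ deg D, else 0 ] + O(3^{ω(D)} q^{3ℓ−5k}), with implied constant depending only on q. -/
/-!
Statement 17.  The small-range estimate for the adjusted root-counting sum
`Φ^{ir}(ℓ,k,D)` over the horizontally irreducible binary cubic forms on the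
Hirzebruch surface `F_k` over `F_q`.
-/
open scoped Classical

noncomputable section

namespace Stmt17

/-- Closed points of the projective line `P¹` over `F_q`: `none` is the point at
infinity, and `some p` corresponds to the monic irreducible polynomial `p`. -/
abbrev P1Pt (Fq : Type) [Field Fq] : Type :=
  Option {p : Polynomial Fq // p.Monic ∧ Irreducible p}

variable {Fq : Type} [Field Fq]

/-- The degree of a closed point of `P¹`. -/
def P1Pt.deg : P1Pt Fq → ℕ
  | none => 1
  | some p => p.1.natDegree

/-- The residue field of a closed point of `P¹`. -/
def P1Pt.Res : P1Pt Fq → Type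
  | none => Fq
  | some p => AdjoinRoot p.1

instance (P : P1Pt Fq) : CommRing (P1Pt.Res P) :=
  match P with
  | none => inferInstanceAs (CommRing Fq)
  | some p => inferInstanceAs (CommRing (AdjoinRoot p.1))

instance (P : P1Pt Fq) : Algebra Fq (P1Pt.Res P) :=
  match P with
  | none => Algebra.id Fq
  | some p => inferInstanceAs (Algebra Fq (AdjoinRoot p.1))

/-- The homogeneous coordinates `(t₀ : t₁)` of a closed point of `P¹`, in its residue
field: `(1 : 0)` for the point at infinity, and `(θ : 1)` with `θ` the root of `p`
for the point `some p`. -/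
def P1Pt.coords : (P : P1Pt Fq) → Fin 2 → P1Pt.Res P
  | none => ![1, 0]
  | some p => ![AdjoinRoot.root p.1, 1]

/-- Evaluate a polynomial in the homogeneous coordinates `t₀, t₁` of the base `P¹`
at a closed point `P`, in the residue field of `P`. -/
def resEval (P : P1Pt Fq) (A : MvPolynomial (Fin 2) Fq) : P1Pt.Res P :=
  MvPolynomial.aeval (P1Pt.coords P) A

/-- `r_P(s)`: the number of relative degree one points of the fiber of `F_k → P¹`
over `P` at which the binary cubic form `s = (A₀, A₁, A₂, A₃)` vanishes.  These
points are the `(z : 1)` with `z` in the residue field of `P`, together with `(1 : 0)`. -/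
def rP (P : P1Pt Fq) (s : Fin 4 → MvPolynomial (Fin 2) Fq) : ℕ :=
  Nat.card {z : P1Pt.Res P //
      resEval P (s 0) * z ^ 3 + resEval P (s 1) * z ^ 2
        + resEval P (s 2) * z + resEval P (s 3) = 0} +
    (if resEval P (s 0) = 0 then 1 else 0)

/-- The degree of a reduced effective divisor (a finite set of closed points) on `P¹`. -/
def degD (D : Finset (P1Pt Fq)) : ℕ := ∑ P ∈ D, P1Pt.deg P

/-- `r_D(s) = ∏_{P ∣ D} r_P(s)`. -/
def rD (D : Finset (P1Pt Fq)) (s : Fin 4 → MvPolynomial (Fin 2) Fq) : ℕ :=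
  ∏ P ∈ D, rP P s

/-- `a_D(s) = ∏_{P ∣ D} (r_P(s) − 1)`. -/
def aD (D : Finset (P1Pt Fq)) (s : Fin 4 → MvPolynomial (Fin 2) Fq) : ℤ :=
  ∏ P ∈ D, ((rP P s : ℤ) - 1)

/-- `p` is homogeneous of (possibly negative) degree `d`; for `d < 0` this forces
`p = 0`. -/
def IsHomOfDeg (p : MvPolynomial (Fin 2) Fq) (d : ℤ) : Prop :=
  p.IsHomogeneous d.toNat ∧ (d < 0 → p = 0)

/-- The space of global sections of `O(m, ℓ)` on the Hirzebruch surface `F_k`,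
viewed as tuples `(A₀, …, A_m)` of binary forms with `A_i` homogeneous of degree
`ℓ − i·k`. -/
def SecSet (m ℓ k : ℕ) : Set (Fin (m + 1) → MvPolynomial (Fin 2) Fq) :=
  {s | ∀ i : Fin (m + 1), IsHomOfDeg (s i) ((ℓ : ℤ) - (i : ℕ) * k)}

/-- A binary cubic form `s ∈ H⁰(F_k, O(3,ℓ))` is horizontally reducible iff it is
zero or factors as a product of a nonzero quadratic and a nonzero linear form in
`x, y` with homogeneous polynomial coefficients. -/
def HorizRed (k : ℕ) (s : Fin 4 → MvPolynomial (Fin 2) Fq) : Prop :=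
  s = 0 ∨ ∃ (b c : ℤ) (B : Fin 3 → MvPolynomial (Fin 2) Fq)
      (C : Fin 2 → MvPolynomial (Fin 2) Fq),
    B ≠ 0 ∧ C ≠ 0 ∧
    (∀ j : Fin 3, IsHomOfDeg (B j) (b - (j : ℕ) * k)) ∧
    (∀ j : Fin 2, IsHomOfDeg (C j) (c - (j : ℕ) * k)) ∧
    s 0 = B 0 * C 0 ∧ s 1 = B 0 * C 1 + B 1 * C 0 ∧
    s 2 = B 1 * C 1 + B 2 * C 0 ∧ s 3 = B 2 * C 1

set_option linter.unusedSectionVars false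

section Fields

variable {R : Type} [CommRing R] [IsDomain R] [Finite R]

/-- root count of a cubic form over a finite domain -/
def rc (a b c e : R) : ℕ :=
  Nat.card {z : R // a * z ^ 3 + b * z ^ 2 + c * z + e = 0} + (if a = 0 then 1 else 0)

lemma rc_zero : (rc (0 : R) 0 0 0 : ℤ) - 1 = Nat.card R := by
  unfold rc
  have : Nat.card {z : R // (0:R) * z ^ 3 + 0 * z ^ 2 + 0 * z + 0 = 0} = Nat.card R := by
    apply Nat.card_congr
    exact Equiv.subtypeUnivEquiv (by simp)
  rw [this]; simp

lemma card_roots_aux (f : Polynomial R) (hf : f ≠ 0) :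
    Nat.card {z : R // f.eval z = 0} ≤ f.natDegree := by
  have h1 : Nat.card {z : R // f.eval z = 0} = f.roots.toFinset.card := by
    rw [← Fintype.card_coe, ← Nat.card_eq_fintype_card]
    apply Nat.card_congr
    apply Equiv.subtypeEquivRight
    intro z
    simp [hf]
  rw [h1]
  exact (Multiset.toFinset_card_le _).trans (Polynomial.card_roots' f)

lemma rc_le (a b c e : R) (h : ¬ (a = 0 ∧ b = 0 ∧ c = 0 ∧ e = 0)) :
    |(rc a b c e : ℤ) - 1| ≤ 2 := by
  have h3 : rc a b c e ≤ 3 := by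
    unfold rc
    by_cases ha : a = 0
    · subst ha
      set f : Polynomial R := Polynomial.C b * Polynomial.X ^ 2 + Polynomial.C c * Polynomial.X
        + Polynomial.C e with hf
      have hf0 : f ≠ 0 := by
        intro h0
        apply h
        refine ⟨rfl, ?_, ?_, ?_⟩
        · have := congrArg (fun g => g.coeff 2) h0
          simpa [hf, Polynomial.coeff_X, Polynomial.coeff_C] using this
        · have := congrArg (fun g => g.coeff 1) h0
          simpa [hf, Polynomial.coeff_X, Polynomial.coeff_C] using this
        · have := congrArg (fun g => g.coeff 0) h0
          simpa [hf, Polynomial.coeff_X, Polynomial.coeff_C] using this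
      have h1 := card_roots_aux f hf0
      have h2 : f.natDegree ≤ 2 := Polynomial.natDegree_quadratic_le
      have h4 : Nat.card {z : R // (0:R) * z ^ 3 + b * z ^ 2 + c * z + e = 0}
          = Nat.card {z : R // f.eval z = 0} := by
        simp [hf]
      rw [h4]; simp; omega
    · set f : Polynomial R := Polynomial.C a * Polynomial.X ^ 3 + Polynomial.C b * Polynomial.X ^ 2
        + Polynomial.C c * Polynomial.X + Polynomial.C e with hf
      have hf0 : f ≠ 0 := by
        intro h0
        apply ha
        have := congrArg (fun g => g.coeff 3) h0
        simpa [hf, Polynomial.coeff_X, Polynomial.coeff_C] using this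
      have h1 := card_roots_aux f hf0
      have h2 : f.natDegree ≤ 3 := Polynomial.natDegree_cubic_le
      have h4 : Nat.card {z : R // a * z ^ 3 + b * z ^ 2 + c * z + e = 0}
          = Nat.card {z : R // f.eval z = 0} := by
        simp [hf]
      rw [h4]; simp [ha]; omega
  rw [abs_le]; constructor <;> omega

lemma sum_rc [Fintype R] (b c e : R) :
    ∑ a : R, ((rc a b c e : ℤ) - 1) = if e = 0 then (Fintype.card R : ℤ) else 0 := by
  have h1 : ∀ a : R, (rc a b c e : ℤ) =
      (∑ z : R, if a * z ^ 3 + b * z ^ 2 + c * z + e = 0 then (1:ℤ) else 0) +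
        (if a = 0 then 1 else 0) := by
    intro a
    unfold rc
    rw [Nat.card_eq_fintype_card, Fintype.card_subtype]
    simp
  have h2 : ∀ z : R, (∑ a : R, if a * z ^ 3 + b * z ^ 2 + c * z + e = 0 then (1:ℤ) else 0)
      = if z = 0 then (if e = 0 then (Fintype.card R : ℤ) else 0) else 1 := by
    intro z
    by_cases hz : z = 0
    · subst hz
      simp
    · have hinj : Function.Injective (fun a : R => a * z ^ 3) :=
        mul_left_injective₀ (pow_ne_zero 3 hz)
      obtain ⟨a0, ha0⟩ := (Finite.injective_iff_surjective.mp hinj) (-(b * z ^ 2 + c * z + e))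
      simp only at ha0
      rw [if_neg hz, Finset.sum_eq_single a0]
      · rw [if_pos]; rw [ha0]; ring
      · intro a _ hne
        rw [if_neg]
        intro h
        apply hne
        apply hinj
        simp only
        rw [ha0]; linear_combination h
      · simp
  simp_rw [h1]
  rw [Finset.sum_sub_distrib, Finset.sum_add_distrib, Finset.sum_comm]
  simp_rw [h2]
  have h3 : (∑ z : R, if z = 0 then (if e = 0 then (Fintype.card R : ℤ) else 0) else 1)
     = (if e = 0 then (Fintype.card R : ℤ) else 0) + (Fintype.card R - 1) := by
    rw [← Finset.add_sum_erase _ _ (Finset.mem_univ (0:R))]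
    rw [if_pos rfl]
    congr 1
    rw [Finset.sum_congr rfl (g := fun _ => (1:ℤ))]
    · have : 0 < Fintype.card R := Fintype.card_pos
      simp [Finset.card_erase_of_mem, Finset.card_univ]
      omega
    · intro x hx; rw [if_neg]; simpa using hx
  rw [h3]
  simp only [Finset.sum_ite_eq', Finset.mem_univ, if_true, Finset.sum_const, Finset.card_univ,
    nsmul_eq_mul, mul_one]
  ring

end Fields

section Points

variable [Fintype Fq]

instance instResDom (P : P1Pt Fq) : IsDomain (P1Pt.Res P) :=
  match P with
  | none => inferInstanceAs (IsDomain Fq)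
  | some p => AdjoinRoot.isDomain_of_prime p.2.2.prime

lemma natCard_res (P : P1Pt Fq) :
    Finite (P1Pt.Res P) ∧ Nat.card (P1Pt.Res P) = Fintype.card Fq ^ P1Pt.deg P := by
  match P with
  | none =>
    refine ⟨inferInstanceAs (Finite Fq), ?_⟩
    change Nat.card Fq = Fintype.card Fq ^ 1
    simp
  | some p =>
    let e := (AdjoinRoot.powerBasis p.2.2.ne_zero).basis.equivFun
    change Finite (AdjoinRoot p.1) ∧ Nat.card (AdjoinRoot p.1) = Fintype.card Fq ^ p.1.natDegree
    refine ⟨Finite.of_equiv _ e.symm.toEquiv, ?_⟩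
    rw [Nat.card_congr e.toEquiv]
    simp

instance instResFin (P : P1Pt Fq) : Finite (P1Pt.Res P) := (natCard_res P).1

instance instResFintype (P : P1Pt Fq) : Fintype (P1Pt.Res P) := Fintype.ofFinite _

lemma card_res (P : P1Pt Fq) : Fintype.card (P1Pt.Res P) = Fintype.card Fq ^ P1Pt.deg P := by
  rw [← Nat.card_eq_fintype_card]; exact (natCard_res P).2

lemma rP_eq (P : P1Pt Fq) (s : Fin 4 → MvPolynomial (Fin 2) Fq) :
    rP P s = rc (resEval P (s 0)) (resEval P (s 1)) (resEval P (s 2)) (resEval P (s 3)) := rfl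

lemma resEval_some (p) {d : ℕ} {G : Polynomial Fq} (hG : G.natDegree ≤ d) :
    resEval (some p) (G.homogenize d) = 0 ↔ p.1 ∣ G := by
  have h : resEval (some p) (G.homogenize d) = AdjoinRoot.mk p.1 G := by
    rw [← AdjoinRoot.aeval_eq]
    exact Polynomial.aeval_homogenize_of_eq_one (A := AdjoinRoot p.1) hG
      ![AdjoinRoot.root p.1, 1] rfl
  rw [h]
  exact AdjoinRoot.mk_eq_zero

lemma resEval_none {d : ℕ} {G : Polynomial Fq} :
    resEval none (G.homogenize d) = G.coeff d := by
  change MvPolynomial.aeval (![1, 0] : Fin 2 → Fq) (G.homogenize d) = G.coeff d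
  rw [Polynomial.homogenize, map_sum, Finset.sum_eq_single (d, 0)]
  · simp [MvPolynomial.aeval_monomial, Finsupp.prod_fintype]
  · rintro ⟨i, j⟩ hij hne
    have hj : j ≠ 0 := by
      rintro rfl
      apply hne; simp at hij; simp [hij]
    simp [MvPolynomial.aeval_monomial, Finsupp.prod_fintype, hj]
  · simp

/-- the monic polynomial at a point -/
def pol : P1Pt Fq → Polynomial Fq
  | none => 1
  | some p => p.1

lemma pol_monic (P : P1Pt Fq) : (pol P).Monic := by
  match P with
  | none => exact Polynomial.monic_one
  | some p => exact p.2.1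

lemma degD_eq (D : Finset (P1Pt Fq)) :
    degD D = (∏ P ∈ D, pol P).natDegree + if none ∈ D then 1 else 0 := by
  rw [Polynomial.natDegree_prod_of_monic _ _ (fun P _ => pol_monic P)]
  have : (if none ∈ D then 1 else 0) = ∑ P ∈ D, if P = none then 1 else 0 := by
    rw [Finset.sum_ite_eq' D none]
  rw [this, ← Finset.sum_add_distrib]
  apply Finset.sum_congr rfl
  intro P _
  match P with
  | none => simp [pol, P1Pt.deg]
  | some p => simp [pol, P1Pt.deg]

lemma pol_coprime (D : Finset (P1Pt Fq)) :
    (D : Set (P1Pt Fq)).Pairwise (fun P Q => IsCoprime (pol P) (pol Q)) := by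
  intro P _ Q _ hne
  match P, Q with
  | none, _ => exact isCoprime_one_left
  | some p, none => exact isCoprime_one_right
  | some p, some r =>
    rw [show pol (some p) = p.1 from rfl, show pol (some r) = r.1 from rfl]
    rw [p.2.2.coprime_iff_not_dvd]
    intro hd
    apply hne
    have := (p.2.2.associated_of_dvd r.2.2 hd)
    have := Polynomial.eq_of_monic_of_associated p.2.1 r.2.1 this
    rw [Subtype.ext this]

lemma hom_surj {d : ℕ} {f : MvPolynomial (Fin 2) Fq} (hf : f.IsHomogeneous d) :
    ∃ G : Polynomial Fq, G.natDegree ≤ d ∧ G.homogenize d = f := by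
  refine ⟨∑ i ∈ Finset.range (d + 1), Polynomial.monomial i (f.coeff (fun₀ | 0 => i | 1 => d - i)),
    ?_, ?_⟩
  · apply Polynomial.natDegree_sum_le_of_forall_le
    intro i hi
    refine (Polynomial.natDegree_monomial_le _).trans ?_
    simp at hi; omega
  · ext m
    rw [Polynomial.coeff_homogenize]
    split_ifs with h
    · rw [Polynomial.finsetSum_coeff, Finset.sum_eq_single (m 0)]
      · have : (fun₀ | 0 => m 0 | 1 => d - m 0) = m := by
          ext i; fin_cases i
          · simp
          · simp; omega
        simp [this]
      · intro i _ hi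
        simp [Polynomial.coeff_monomial, hi]
      · intro h'; simp at h'; omega
    · symm
      apply hf.coeff_eq_zero
      rw [Finsupp.degree_eq_sum]
      simpa using h

lemma homogenize_inj {d : ℕ} {G G' : Polynomial Fq} (h : G.natDegree ≤ d) (h' : G'.natDegree ≤ d)
    (hh : G.homogenize d = G'.homogenize d) : G = G' := by
  rw [← sub_eq_zero]
  apply Polynomial.eq_zero_of_homogenize_eq_zero (n := d)
  · exact (Polynomial.natDegree_sub_le _ _).trans (max_le h h')
  · have := map_sub (Polynomial.homogenizeLM (R := Fq) d) G G'
    simp only [Polynomial.homogenizeLM_apply] at this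
    rw [this, hh, sub_self]

/-- forms of degree `d` vanishing on `D` -/
def VS (d : ℕ) (D : Finset (P1Pt Fq)) : Set (MvPolynomial (Fin 2) Fq) :=
  {f | f.IsHomogeneous d ∧ ∀ P ∈ D, resEval P f = 0}

lemma VS_bij (d : ℕ) (D : Finset (P1Pt Fq)) :
    Set.BijOn (fun g : Polynomial Fq => ((∏ P ∈ D, pol P) * g).homogenize d)
      (Polynomial.degreeLT Fq (d + 1 - degD D)) (VS d D) := by
  set h := ∏ P ∈ D, pol P with hh
  have hm : h.Monic := Polynomial.monic_prod_of_monic _ _ (fun P _ => pol_monic P)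
  have hD := degD_eq D
  rw [← hh] at hD
  have key : ∀ g ∈ (Polynomial.degreeLT Fq (d + 1 - degD D) : Set (Polynomial Fq)),
      g = 0 ∨ (h * g).natDegree + (if none ∈ D then 1 else 0) ≤ d := by
    intro g hg
    by_cases h0 : g = 0
    · exact Or.inl h0
    · right
      rw [SetLike.mem_coe, Polynomial.mem_degreeLT, ← Polynomial.natDegree_lt_iff_degree_lt h0] at hg
      rw [hm.natDegree_mul' h0]
      omega
  have key2 : ∀ g ∈ (Polynomial.degreeLT Fq (d + 1 - degD D) : Set (Polynomial Fq)),
      (h * g).natDegree ≤ d := by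
    intro g hg
    rcases key g hg with rfl | h
    · simp
    · omega
  refine ⟨?_, ?_, ?_⟩
  · intro g hg
    refine ⟨Polynomial.isHomogeneous_homogenize _, ?_⟩
    intro P hP
    match P with
    | none =>
      refine resEval_none.trans ?_
      rcases key g hg with rfl | h'
      · simp only [mul_zero, Polynomial.coeff_zero]
        rfl
      · rw [if_pos hP] at h'
        have h4 : (h * g).natDegree < d := by omega
        exact Polynomial.coeff_eq_zero_of_natDegree_lt h4
    | some p =>
      rw [resEval_some p (key2 g hg)]
      exact Dvd.dvd.mul_right (Finset.dvd_prod_of_mem pol hP) g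
  · intro g hg g' hg' hgg
    have := homogenize_inj (key2 g hg) (key2 g' hg') hgg
    exact mul_left_cancel₀ hm.ne_zero this
  · rintro f ⟨hf, hv⟩
    obtain ⟨G, hG, rfl⟩ := hom_surj hf
    have hd : h ∣ G := by
      apply Finset.prod_dvd_of_coprime (pol_coprime D)
      intro P hP
      match P with
      | none => exact one_dvd _
      | some p => exact (resEval_some p hG).mp (hv _ hP)
    obtain ⟨g, rfl⟩ := hd
    refine ⟨g, ?_, rfl⟩
    rw [SetLike.mem_coe, Polynomial.mem_degreeLT]
    by_cases h0 : g = 0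
    · subst h0; simp
    rw [← Polynomial.natDegree_lt_iff_degree_lt h0]
    have h1 : (h * g).natDegree = h.natDegree + g.natDegree := hm.natDegree_mul' h0
    by_cases hn : none ∈ D
    · rw [if_pos hn] at hD
      have h2 : (h * g).coeff d = 0 := resEval_none.symm.trans (hv _ hn)
      have h3 : (h * g).natDegree ≠ d := by
        intro h3
        rw [← h3] at h2
        have := Polynomial.leadingCoeff_eq_zero.mp h2
        exact mul_ne_zero hm.ne_zero h0 this
      omega
    · rw [if_neg hn] at hD
      omega

lemma VS_finite (d : ℕ) (D : Finset (P1Pt Fq)) : (VS d D).Finite := by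
  rw [← (VS_bij d D).image_eq]
  apply Set.Finite.image
  have : Finite (Polynomial.degreeLT Fq (d + 1 - degD D)) :=
    Finite.of_equiv _ (Polynomial.degreeLTEquiv Fq _).symm.toEquiv
  exact Set.toFinite _

lemma VS_ncard (d : ℕ) (D : Finset (P1Pt Fq)) : (VS d D).ncard = Fintype.card Fq ^ (d + 1 - degD D) := by
  rw [← (VS_bij d D).image_eq, (VS_bij d D).injOn.ncard_image]
  rw [← Nat.card_coe_set_eq]
  refine (Nat.card_congr (Polynomial.degreeLTEquiv Fq (d + 1 - degD D)).toEquiv).trans ?_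
  simp

/-- forms of degree `d` vanishing on `D`, as a finset -/
def VF (d : ℕ) (D : Finset (P1Pt Fq)) : Finset (MvPolynomial (Fin 2) Fq) := (VS_finite d D).toFinset

lemma mem_VF {d : ℕ} {D : Finset (P1Pt Fq)} {f} :
    f ∈ VF d D ↔ f.IsHomogeneous d ∧ ∀ P ∈ D, resEval P f = 0 := by
  simp [VF, VS]

lemma VF_card (d : ℕ) (D : Finset (P1Pt Fq)) : (VF d D).card = Fintype.card Fq ^ (d + 1 - degD D) := by
  rw [VF, ← Set.ncard_eq_toFinset_card _ (VS_finite d D), VS_ncard]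

lemma resEval_sub (P : P1Pt Fq) (f g : MvPolynomial (Fin 2) Fq) :
    resEval P (f - g) = resEval P f - resEval P g := by
  simp [resEval]

lemma resEval_add (P : P1Pt Fq) (f g : MvPolynomial (Fin 2) Fq) :
    resEval P (f + g) = resEval P f + resEval P g := by
  simp [resEval]

lemma resEval_mul (P : P1Pt Fq) (f g : MvPolynomial (Fin 2) Fq) :
    resEval P (f * g) = resEval P f * resEval P g := by
  simp [resEval]

lemma resEval_zero (P : P1Pt Fq) : resEval P (0 : MvPolynomial (Fin 2) Fq) = 0 := by
  simp [resEval]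

lemma degD_empty : degD (∅ : Finset (P1Pt Fq)) = 0 := by simp [degD]

lemma fiber_card (d : ℕ) (D : Finset (P1Pt Fq)) (hD : degD D ≤ d + 1)
    (v : (P : {P // P ∈ D}) → P1Pt.Res P.1) :
    ((VF d ∅).filter (fun f => (fun P : {P // P ∈ D} => resEval P.1 f) = v)).card
      = Fintype.card Fq ^ (d + 1 - degD D) := by
  have hle : ∀ v : (P : {P // P ∈ D}) → P1Pt.Res P.1,
      ((VF d ∅).filter (fun f => (fun P : {P // P ∈ D} => resEval P.1 f) = v)).card
      ≤ Fintype.card Fq ^ (d + 1 - degD D) := by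
    intro v
    rcases Finset.eq_empty_or_nonempty
      ((VF d ∅).filter (fun f => (fun P : {P // P ∈ D} => resEval P.1 f) = v)) with h | ⟨f0, hf0⟩
    · rw [h]; simp
    · rw [← VF_card]
      rw [Finset.mem_filter, mem_VF] at hf0
      apply Finset.card_le_card_of_injOn (fun f => f - f0)
      · intro f hf
        rw [Finset.mem_coe, Finset.mem_filter, mem_VF] at hf
        rw [Finset.mem_coe, mem_VF]
        refine ⟨hf.1.1.sub hf0.1.1, ?_⟩
        intro P hP
        rw [resEval_sub]
        have h1 := congrFun hf.2 ⟨P, hP⟩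
        have h2 := congrFun hf0.2 ⟨P, hP⟩
        simp only at h1 h2
        rw [h1, h2, sub_self]
      · intro f _ g _ h
        simpa using h
  have hsum : ∑ v : (P : {P // P ∈ D}) → P1Pt.Res P.1,
      ((VF d ∅).filter (fun f => (fun P : {P // P ∈ D} => resEval P.1 f) = v)).card
      = ∑ v : (P : {P // P ∈ D}) → P1Pt.Res P.1, Fintype.card Fq ^ (d + 1 - degD D) := by
    rw [← Finset.card_eq_sum_card_fiberwise (fun _ _ => Finset.mem_coe.2 (Finset.mem_univ _)),
      VF_card, Finset.sum_const, Finset.card_univ, Fintype.card_pi]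
    simp_rw [card_res]
    rw [Finset.prod_pow_eq_pow_sum, smul_eq_mul, ← pow_add, degD_empty]
    congr 1
    have : ∑ P : {P // P ∈ D}, P1Pt.deg P.1 = degD D := by
      exact Finset.sum_coe_sort D _
    rw [this]; omega
  exact ((Finset.sum_eq_sum_iff_of_le (fun v _ => hle v)).mp hsum) v (Finset.mem_univ _)

lemma sum_forms (d : ℕ) (D : Finset (P1Pt Fq)) (hD : degD D ≤ d + 1)
    (F : (P : P1Pt Fq) → P1Pt.Res P → ℤ) :
    ∑ f ∈ VF d ∅, ∏ P ∈ D, F P (resEval P f)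
      = (Fintype.card Fq : ℤ) ^ (d + 1 - degD D) * ∏ P ∈ D, ∑ a : P1Pt.Res P, F P a := by
  rw [← Finset.sum_fiberwise_of_maps_to (s := VF d ∅)
    (t := (Finset.univ : Finset ((P : {P // P ∈ D}) → P1Pt.Res P.1)))
    (g := fun f => (fun P : {P // P ∈ D} => resEval P.1 f)) (fun _ _ => Finset.mem_univ _)]
  have h1 : ∀ v : (P : {P // P ∈ D}) → P1Pt.Res P.1,
      ∑ f ∈ (VF d ∅).filter (fun f => (fun P : {P // P ∈ D} => resEval P.1 f) = v),
        ∏ P ∈ D, F P (resEval P f)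
      = (Fintype.card Fq : ℤ) ^ (d + 1 - degD D) * ∏ P : {P // P ∈ D}, F P.1 (v P) := by
    intro v
    have h2 : ∀ f ∈ (VF d ∅).filter (fun f => (fun P : {P // P ∈ D} => resEval P.1 f) = v),
        ∏ P ∈ D, F P (resEval P f) = ∏ P : {P // P ∈ D}, F P.1 (v P) := by
      intro f hf
      rw [← (Finset.mem_filter.mp hf).2, ← Finset.prod_coe_sort]
    rw [Finset.sum_congr rfl h2, Finset.sum_const, fiber_card d D hD]
    simp
  simp_rw [h1]
  rw [← Finset.mul_sum, ← Finset.prod_coe_sort, Finset.prod_univ_sum]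
  simp

lemma sum_A0 (d : ℕ) (D : Finset (P1Pt Fq)) (hD : degD D ≤ d + 1)
    (A1 A2 A3 : MvPolynomial (Fin 2) Fq) :
    ∑ f ∈ VF d ∅, aD D ![f, A1, A2, A3]
      = if ∀ P ∈ D, resEval P A3 = 0 then (Fintype.card Fq : ℤ) ^ (d + 1) else 0 := by
  have h := sum_forms d D hD
    (fun P a => (rc a (resEval P A1) (resEval P A2) (resEval P A3) : ℤ) - 1)
  have h' : ∀ f, aD D ![f, A1, A2, A3] = ∏ P ∈ D,
    ((rc (resEval P f) (resEval P A1) (resEval P A2) (resEval P A3) : ℤ) - 1) := fun f => rfl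
  simp_rw [h']
  rw [h]
  simp_rw [sum_rc, card_res]
  rw [Finset.prod_ite_zero]
  split_ifs with h0
  · push_cast
    rw [Finset.prod_pow_eq_pow_sum, ← pow_add]
    congr 1
    change d + 1 - degD D + degD D = _
    omega
  · simp

/-- all sections, as a finset -/
def SF (ℓ k : ℕ) : Finset (Fin 4 → MvPolynomial (Fin 2) Fq) :=
  Fintype.piFinset (fun i : Fin 4 => VF (ℓ - i * k) ∅)

lemma mem_VF_empty {d : ℕ} {f : MvPolynomial (Fin 2) Fq} :
    f ∈ VF d ∅ ↔ f.IsHomogeneous d := by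
  simp [mem_VF]

lemma isHomOfDeg_nat {d : ℕ} {z : ℤ} (h : z = d) {f : MvPolynomial (Fin 2) Fq} :
    IsHomOfDeg f z ↔ f ∈ VF d ∅ := by
  subst h
  rw [mem_VF_empty, IsHomOfDeg]
  simp

lemma mem_SF {ℓ k : ℕ} (h : 3 * k ≤ ℓ) {s : Fin 4 → MvPolynomial (Fin 2) Fq} :
    s ∈ SF ℓ k ↔ s ∈ SecSet 3 ℓ k := by
  rw [SF, Fintype.mem_piFinset]
  apply forall_congr'
  intro i
  rw [isHomOfDeg_nat]
  have : (i : ℕ) * k ≤ 3 * k := Nat.mul_le_mul_right k (by omega)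
  push_cast [Nat.cast_sub (this.trans h)]
  rfl

lemma main_sum (ℓ k : ℕ) (D : Finset (P1Pt Fq)) (hk : 3 * k ≤ ℓ) (hD : degD D ≤ ℓ) :
    ∑ s ∈ (SF ℓ k).filter (fun s => s 3 ≠ 0), aD D s =
      if 3 * k + degD D ≤ ℓ then
        (Fintype.card Fq : ℤ) ^ (4 * ℓ + 4 - 6 * k - degD D) -
          (Fintype.card Fq : ℤ) ^ (3 * ℓ + 3 - 3 * k)
      else 0 := by
  have h1 : ∑ s ∈ (SF ℓ k).filter (fun s => s 3 ≠ 0), aD D s =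
      ∑ x ∈ ((VF (ℓ - 3 * k) ∅).erase 0) ×ˢ ((VF (ℓ - k) ∅) ×ˢ ((VF (ℓ - 2 * k) ∅) ×ˢ (VF ℓ ∅))),
        aD D ![x.2.2.2, x.2.1, x.2.2.1, x.1] := by
    apply Finset.sum_nbij' (fun s => (s 3, s 1, s 2, s 0))
      (fun x => ![x.2.2.2, x.2.1, x.2.2.1, x.1])
    · intro s hs
      rw [Finset.mem_filter, SF, Fintype.mem_piFinset] at hs
      have h0 := hs.1 0
      have h1 := hs.1 1
      have h2 := hs.1 2
      have h3 := hs.1 3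
      simp at h0 h1 h2 h3
      simp [Finset.mem_product, Finset.mem_erase, h0, h1, h2, h3, hs.2]
    · intro x hx
      simp only [Finset.mem_product, Finset.mem_erase] at hx
      rw [Finset.mem_filter, SF, Fintype.mem_piFinset]
      refine ⟨?_, by simpa using hx.1.1⟩
      intro i
      fin_cases i
      · simpa using hx.2.2.2
      · simpa using hx.2.1
      · simpa using hx.2.2.1
      · simpa using hx.1.2
    · intro s _
      ext i : 1
      fin_cases i <;> rfl
    · intro x _; rfl
    · intro s _
      congr 1
      ext i : 1
      fin_cases i <;> rfl
  rw [h1]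
  simp_rw [Finset.sum_product]
  have h2 := fun A1 A2 A3 => sum_A0 ℓ D (by omega) A1 A2 A3
  simp_rw [h2]
  simp only [Finset.sum_const, VF_card, degD_empty, nsmul_eq_mul]
  rw [← Finset.mul_sum, ← Finset.mul_sum, ← Finset.sum_filter, Finset.sum_const]
  have h3 : (((VF (ℓ - 3 * k) ∅).erase 0).filter (fun f => ∀ P ∈ D, resEval P f = 0))
      = (VF (ℓ - 3 * k) D).erase 0 := by
    ext f
    simp only [Finset.mem_filter, Finset.mem_erase, mem_VF]
    simp
    tauto
  have h4 : (0 : MvPolynomial (Fin 2) Fq) ∈ VF (ℓ - 3 * k) D := by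
    rw [mem_VF]
    exact ⟨MvPolynomial.isHomogeneous_zero _ _ _, fun P _ => resEval_zero P⟩
  rw [h3, Finset.card_erase_of_mem h4, VF_card]
  have hq : 1 ≤ Fintype.card Fq ^ (ℓ - 3 * k + 1 - degD D) := Nat.one_le_pow _ _ Fintype.card_pos
  rw [nsmul_eq_mul, Nat.cast_sub hq]
  push_cast
  split_ifs with h
  · have e1 : 4 * ℓ + 4 - 6 * k - degD D = (ℓ - k + 1) + (ℓ - 2 * k + 1) +
      (ℓ - 3 * k + 1 - degD D) + (ℓ + 1) := by omega
    have e2 : 3 * ℓ + 3 - 3 * k = (ℓ - k + 1) + (ℓ - 2 * k + 1) + (ℓ + 1) := by omega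
    rw [e1, e2]
    simp only [pow_add]
    ring
  · have : ℓ - 3 * k + 1 - degD D = 0 := by omega
    rw [this]; simp

lemma vcount (m : ℕ) (d : Fin (m + 1) → ℕ) (i0 : Fin (m + 1)) (hd : ∀ i, d i0 ≤ d i)
    (t : Finset (P1Pt Fq)) :
    (((Fintype.piFinset (fun i => VF (d i) ∅)).filter (fun B => B i0 ≠ 0)).filter
      (fun B => ∀ P ∈ t, ∀ i, resEval P (B i) = 0)).card * Fintype.card Fq ^ ((m + 1) * degD t)
      ≤ Fintype.card Fq ^ (∑ i, (d i + 1)) := by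
  by_cases h : degD t ≤ d i0
  · have h1 : (((Fintype.piFinset (fun i => VF (d i) ∅)).filter (fun B => B i0 ≠ 0)).filter
      (fun B => ∀ P ∈ t, ∀ i, resEval P (B i) = 0)).card
        ≤ (Fintype.piFinset (fun i => VF (d i) t)).card := by
      apply Finset.card_le_card
      intro B hB
      simp only [Finset.mem_filter, Fintype.mem_piFinset, mem_VF_empty] at hB
      rw [Fintype.mem_piFinset]
      intro i
      rw [mem_VF]
      exact ⟨hB.1.1 i, fun P hP => hB.2 P hP i⟩
    refine (Nat.mul_le_mul_right _ h1).trans (le_of_eq ?_)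
    rw [Fintype.card_piFinset]
    simp_rw [VF_card]
    rw [Finset.prod_pow_eq_pow_sum, ← pow_add]
    congr 1
    have : (m + 1) * degD t = ∑ i : Fin (m + 1), degD t := by simp
    rw [this, ← Finset.sum_add_distrib]
    apply Finset.sum_congr rfl
    intro i _
    have := hd i
    omega
  · have h1 : (((Fintype.piFinset (fun i => VF (d i) ∅)).filter (fun B => B i0 ≠ 0)).filter
      (fun B => ∀ P ∈ t, ∀ i, resEval P (B i) = 0)) = ∅ := by
      rw [Finset.eq_empty_iff_forall_notMem]
      intro B hB
      simp only [Finset.mem_filter, Fintype.mem_piFinset, mem_VF_empty] at hB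
      have hc : (VF (d i0) t).card ≤ 1 := by
        rw [VF_card]
        have : d i0 + 1 - degD t = 0 := by omega
        rw [this]; simp
      rw [Finset.card_le_one] at hc
      apply hB.1.2
      apply hc
      · rw [mem_VF]; exact ⟨hB.1.1 i0, fun P hP => hB.2 P hP i0⟩
      · rw [mem_VF]
        exact ⟨MvPolynomial.isHomogeneous_zero _ _ _, fun P _ => resEval_zero P⟩
    rw [h1]; simp

lemma prod_q (t : Finset (P1Pt Fq)) :
    ∏ P ∈ t, (Fintype.card Fq : ℚ) ^ P1Pt.deg P = (Fintype.card Fq : ℚ) ^ degD t := by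
  rw [Finset.prod_pow_eq_pow_sum]; rfl

lemma wsum (m : ℕ) (d : Fin (m + 1) → ℕ) (i0 : Fin (m + 1)) (hd : ∀ i, d i0 ≤ d i)
    (D : Finset (P1Pt Fq)) (u v : ℚ) (hu : 0 ≤ u) (hv : 0 ≤ v) :
    ∑ B ∈ (Fintype.piFinset (fun i => VF (d i) ∅)).filter (fun B => B i0 ≠ 0),
      ∏ P ∈ D, ((if ∀ i, resEval P (B i) = 0 then v * (Fintype.card Fq : ℚ) ^ P1Pt.deg P else 0)
        + u)
    ≤ (Fintype.card Fq : ℚ) ^ (∑ i, (d i + 1)) *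
      ∏ P ∈ D, (v * (Fintype.card Fq : ℚ) ^ P1Pt.deg P /
        ((Fintype.card Fq : ℚ) ^ P1Pt.deg P) ^ (m + 1) + u) := by
  have hq : (0 : ℚ) < Fintype.card Fq := by exact_mod_cast Fintype.card_pos
  simp_rw [Finset.prod_add]
  rw [Finset.sum_comm, Finset.mul_sum]
  apply Finset.sum_le_sum
  intro t _
  rw [← Finset.sum_mul, ← mul_assoc]
  apply mul_le_mul_of_nonneg_right _ (Finset.prod_nonneg (fun _ _ => hu))
  simp_rw [Finset.prod_ite_zero]
  rw [← Finset.sum_filter, Finset.sum_const, nsmul_eq_mul]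
  rw [Finset.prod_div_distrib, Finset.prod_pow, prod_q]
  have hc := vcount m d i0 hd t
  have hc' : ((((Fintype.piFinset (fun i => VF (d i) ∅)).filter (fun B => B i0 ≠ 0)).filter
      (fun B => ∀ P ∈ t, ∀ i, resEval P (B i) = 0)).card : ℚ)
        * (Fintype.card Fq : ℚ) ^ ((m + 1) * degD t)
      ≤ (Fintype.card Fq : ℚ) ^ (∑ i, (d i + 1)) := by exact_mod_cast hc
  rw [← mul_div_assoc, le_div_iff₀ (by positivity), ← pow_mul, mul_comm (degD t)]
  have hp : 0 ≤ ∏ P ∈ t, v * (Fintype.card Fq : ℚ) ^ P1Pt.deg P :=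
    Finset.prod_nonneg (fun _ _ => by positivity)
  calc _ = ((((Fintype.piFinset (fun i => VF (d i) ∅)).filter (fun B => B i0 ≠ 0)).filter
      (fun B => ∀ P ∈ t, ∀ i, resEval P (B i) = 0)).card : ℚ)
        * (Fintype.card Fq : ℚ) ^ ((m + 1) * degD t)
        * ∏ P ∈ t, v * (Fintype.card Fq : ℚ) ^ P1Pt.deg P := by ring
    _ ≤ _ := mul_le_mul_of_nonneg_right hc' hp

/-- product of a quadratic and a linear form -/
def mulBC (B : Fin 3 → MvPolynomial (Fin 2) Fq) (C : Fin 2 → MvPolynomial (Fin 2) Fq) :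
    Fin 4 → MvPolynomial (Fin 2) Fq :=
  ![B 0 * C 0, B 0 * C 1 + B 1 * C 0, B 1 * C 1 + B 2 * C 0, B 2 * C 1]

lemma vanish_or (P : P1Pt Fq) (B : Fin 3 → MvPolynomial (Fin 2) Fq)
    (C : Fin 2 → MvPolynomial (Fin 2) Fq)
    (h : resEval P (mulBC B C 0) = 0 ∧ resEval P (mulBC B C 1) = 0 ∧
      resEval P (mulBC B C 2) = 0 ∧ resEval P (mulBC B C 3) = 0) :
    (∀ i, resEval P (B i) = 0) ∨ (∀ i, resEval P (C i) = 0) := by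
  obtain ⟨h0, h1, h2, h3⟩ := h
  change resEval P (B 0 * C 0) = 0 at h0
  change resEval P (B 0 * C 1 + B 1 * C 0) = 0 at h1
  change resEval P (B 1 * C 1 + B 2 * C 0) = 0 at h2
  change resEval P (B 2 * C 1) = 0 at h3
  simp only [resEval_mul, resEval_add] at h0 h1 h2 h3
  by_cases c0 : resEval P (C 0) = 0
  · by_cases c1 : resEval P (C 1) = 0
    · right; intro i; fin_cases i
      · exact c0
      · exact c1
    · left
      simp only [c0, mul_zero, add_zero, mul_eq_zero, c1, or_false] at h1 h2 h3
      intro i; fin_cases i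
      · exact h1
      · exact h2
      · exact h3
  · left
    simp only [mul_eq_zero, c0, or_false] at h0
    simp only [h0, zero_mul, zero_add, mul_eq_zero, c0, or_false] at h1
    simp only [h1, zero_mul, zero_add, mul_eq_zero, c0, or_false] at h2
    intro i; fin_cases i
    · exact h0
    · exact h1
    · exact h2

lemma aD_bound (D : Finset (P1Pt Fq)) (B : Fin 3 → MvPolynomial (Fin 2) Fq)
    (C : Fin 2 → MvPolynomial (Fin 2) Fq) :
    |(aD D (mulBC B C) : ℚ)| ≤
      (∏ P ∈ D, ((if ∀ i, resEval P (B i) = 0 then 1 * (Fintype.card Fq : ℚ) ^ P1Pt.deg P else 0)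
        + 2)) *
      (∏ P ∈ D, ((if ∀ i, resEval P (C i) = 0 then 1 / 2 * (Fintype.card Fq : ℚ) ^ P1Pt.deg P
        else 0) + 1)) := by
  rw [← Finset.prod_mul_distrib, aD]
  push_cast
  rw [Finset.abs_prod]
  apply Finset.prod_le_prod (fun _ _ => abs_nonneg _)
  intro P _
  have hq : (0 : ℚ) < (Fintype.card Fq : ℚ) ^ P1Pt.deg P := by
    have : (0 : ℚ) < Fintype.card Fq := by exact_mod_cast Fintype.card_pos
    positivity
  rw [rP_eq]
  by_cases h : resEval P (mulBC B C 0) = 0 ∧ resEval P (mulBC B C 1) = 0 ∧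
      resEval P (mulBC B C 2) = 0 ∧ resEval P (mulBC B C 3) = 0
  · have hv := vanish_or P B C h
    obtain ⟨h0, h1, h2, h3⟩ := h
    rw [h0, h1, h2, h3]
    have hr := rc_zero (R := P1Pt.Res P)
    rw [(natCard_res P).2] at hr
    have hr' : ((rc (0 : P1Pt.Res P) 0 0 0 : ℚ)) - 1 = (Fintype.card Fq : ℚ) ^ P1Pt.deg P := by
      exact_mod_cast hr
    rw [hr', abs_of_pos hq]
    rcases hv with hv | hv
    · rw [if_pos hv]
      split_ifs <;> nlinarith
    · rw [if_pos hv]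
      split_ifs <;> nlinarith
  · have hr := rc_le _ _ _ _ h
    have hr' : |(rc (resEval P (mulBC B C 0)) (resEval P (mulBC B C 1)) (resEval P (mulBC B C 2))
      (resEval P (mulBC B C 3)) : ℚ) - 1| ≤ 2 := by exact_mod_cast hr
    refine hr'.trans ?_
    split_ifs <;> nlinarith

/-- quadratic factors -/
def BF (b k : ℕ) : Finset (Fin 3 → MvPolynomial (Fin 2) Fq) :=
  (Fintype.piFinset (fun i : Fin (2 + 1) => VF (b - i * k) ∅)).filter (fun B => B 2 ≠ 0)

/-- linear factors -/
def CF (c k : ℕ) : Finset (Fin 2 → MvPolynomial (Fin 2) Fq) :=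
  (Fintype.piFinset (fun i : Fin (1 + 1) => VF (c - i * k) ∅)).filter (fun B => B 1 ≠ 0)

lemma deg_pos (P : P1Pt Fq) : 1 ≤ P1Pt.deg P := by
  match P with
  | none => exact le_refl 1
  | some p => exact p.2.2.natDegree_pos

lemma BC_bound (b c k : ℕ) (hb : 2 * k ≤ b) (hc : k ≤ c) (D : Finset (P1Pt Fq)) :
    ∑ x ∈ (BF b k ×ˢ CF c k : Finset ((Fin 3 → MvPolynomial (Fin 2) Fq) × _)),
      |(aD D (mulBC x.1 x.2) : ℚ)| ≤
      (Fintype.card Fq : ℚ) ^ (3 * b - 3 * k + 3 + (2 * c - k + 2)) * 3 ^ D.card := by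
  have hq : (2 : ℚ) ≤ Fintype.card Fq := by
    exact_mod_cast (Fintype.one_lt_card : 1 < Fintype.card Fq)
  refine (Finset.sum_le_sum (fun x _ => aD_bound D x.1 x.2)).trans ?_
  rw [Finset.sum_product]
  refine le_trans (le_of_eq (Finset.sum_mul_sum (BF b k) (CF c k)
    (fun B => ∏ P ∈ D, ((if ∀ i, resEval P (B i) = 0 then
      1 * (Fintype.card Fq : ℚ) ^ P1Pt.deg P else 0) + 2))
    (fun C => ∏ P ∈ D, ((if ∀ i, resEval P (C i) = 0 then
      1 / 2 * (Fintype.card Fq : ℚ) ^ P1Pt.deg P else 0) + 1))).symm) ?_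
  have h1 := wsum 2 (fun i => b - i * k) 2 (by intro i; fin_cases i <;> simp <;> omega) D 2 1
    (by norm_num) (by norm_num)
  have h2 := wsum 1 (fun i => c - i * k) 1 (by intro i; fin_cases i <;> simp) D 1 (1 / 2)
    (by norm_num) (by norm_num)
  refine (mul_le_mul h1 h2 ?_ ?_).trans ?_
  · apply Finset.sum_nonneg; intro _ _
    apply Finset.prod_nonneg; intro _ _
    split_ifs <;> positivity
  · apply mul_nonneg (by positivity)
    apply Finset.prod_nonneg; intro _ _
    positivity
  · rw [mul_mul_mul_comm, ← pow_add, ← Finset.prod_mul_distrib]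
    have e : (∑ i : Fin (2 + 1), (b - i * k + 1)) + (∑ i : Fin (1 + 1), (c - i * k + 1))
        = 3 * b - 3 * k + 3 + (2 * c - k + 2) := by
      simp [Fin.sum_univ_succ]
      omega
    rw [e]
    apply mul_le_mul_of_nonneg_left _ (by positivity)
    rw [← Finset.prod_const]
    apply Finset.prod_le_prod
    · intro _ _; positivity
    · intro P _
      set y := (Fintype.card Fq : ℚ) ^ P1Pt.deg P with hy
      have hy2 : 2 ≤ y := by
        calc (2 : ℚ) ≤ Fintype.card Fq := hq
          _ = (Fintype.card Fq : ℚ) ^ 1 := (pow_one _).symm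
          _ ≤ y := pow_le_pow_right₀ (by linarith) (deg_pos P)
      have a1 : 1 * y / y ^ (2 + 1) ≤ 1 / 4 := by
        rw [div_le_div_iff₀ (by positivity) (by norm_num)]
        have z1 : (0 : ℚ) ≤ y * ((y - 2) * (y + 2)) :=
          mul_nonneg (by linarith) (mul_nonneg (by linarith) (by linarith))
        have z2 : y * ((y - 2) * (y + 2)) = y ^ (2 + 1) - 4 * y := by ring
        linarith
      have a2 : 1 / 2 * y / y ^ (1 + 1) ≤ 1 / 4 := by
        rw [div_le_div_iff₀ (by positivity) (by norm_num)]
        nlinarith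
      have a3 : 0 ≤ 1 / 2 * y / y ^ (1 + 1) := by positivity
      nlinarith

lemma geom_bound (x : ℚ) (hx : 2 ≤ x) (N n : ℕ) (hn : n ≤ N + 1) :
    ∑ j ∈ Finset.range n, x ^ (N - j) ≤ 2 * x ^ N := by
  have h : ∀ j ∈ Finset.range n, x ^ (N - j) ≤ x ^ N * (1 / 2) ^ j := by
    intro j hj
    have hj' : j ≤ N := by simp at hj; omega
    have : x ^ N = x ^ (N - j) * x ^ j := by rw [← pow_add]; congr 1; omega
    rw [this, mul_assoc, ← mul_pow]
    have h1 : 1 ≤ (x * (1 / 2)) ^ j := one_le_pow₀ (by linarith)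
    have h2 : 0 ≤ x ^ (N - j) := by positivity
    nlinarith
  refine (Finset.sum_le_sum h).trans ?_
  rw [← Finset.mul_sum, mul_comm]
  apply mul_le_mul_of_nonneg_right _ (by positivity)
  have := geom_sum_eq (x := (1/2 : ℚ)) (by norm_num) n
  rw [this]
  have h3 : (0:ℚ) ≤ (1 / 2) ^ n := by positivity
  rw [div_le_iff_of_neg (by norm_num)]
  linarith

lemma red_mem (ℓ k : ℕ) (hk : 3 * k ≤ ℓ) (s : Fin 4 → MvPolynomial (Fin 2) Fq)
    (hs : s ∈ SF ℓ k) (h3 : s 3 ≠ 0) (hr : HorizRed k s) :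
    ∃ j, j ≤ ℓ - 3 * k ∧ ∃ B ∈ BF (Fq := Fq) (ℓ - k - j) k, ∃ C ∈ CF (k + j) k, mulBC B C = s := by
  rcases hr with rfl | ⟨b, c, B, C, -, -, hB, hC, e0, e1, e2, e3⟩
  · simp at h3
  have hB2 : B 2 ≠ 0 := by intro h; apply h3; rw [e3, h, zero_mul]
  have hC1 : C 1 ≠ 0 := by intro h; apply h3; rw [e3, h, mul_zero]
  have hb : 0 ≤ b - 2 * k := by
    by_contra hlt
    exact hB2 ((hB 2).2 (by simpa using hlt))
  have hc : 0 ≤ c - k := by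
    by_contra hlt
    exact hC1 ((hC 1).2 (by simpa using hlt))
  obtain ⟨b', hb'⟩ : ∃ b' : ℕ, b = b' := ⟨b.toNat, by omega⟩
  obtain ⟨c', hc'⟩ : ∃ c' : ℕ, c = c' := ⟨c.toNat, by omega⟩
  subst hb' hc'
  have hs3 : (s 3).IsHomogeneous (ℓ - 3 * k) := by
    rw [SF, Fintype.mem_piFinset] at hs
    exact mem_VF_empty.mp (hs 3)
  have hBm : ∀ i : Fin 3, B i ∈ VF (b' - (i : ℕ) * k) ∅ := by
    intro i
    refine (isHomOfDeg_nat ?_).mp (hB i)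
    have : (i : ℕ) * k ≤ 2 * k := Nat.mul_le_mul_right k (by omega)
    rw [Nat.cast_sub (by omega)]; push_cast; rfl
  have hCm : ∀ i : Fin 2, C i ∈ VF (c' - (i : ℕ) * k) ∅ := by
    intro i
    refine (isHomOfDeg_nat ?_).mp (hC i)
    have : (i : ℕ) * k ≤ 1 * k := Nat.mul_le_mul_right k (by omega)
    rw [Nat.cast_sub (by omega)]; push_cast; rfl
  have hs3' : (s 3).IsHomogeneous ((b' - 2 * k) + (c' - 1 * k)) := by
    rw [e3]
    exact (mem_VF_empty.mp (hBm 2)).mul (mem_VF_empty.mp (hCm 1))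
  have heq := hs3.inj_right hs3' h3
  have hb1 : b' = ℓ - k - (c' - k) := by omega
  have hc1 : c' = k + (c' - k) := by omega
  refine ⟨c' - k, by omega, B, ?_, C, ?_, ?_⟩
  · rw [← hb1, BF, Finset.mem_filter, Fintype.mem_piFinset]
    exact ⟨hBm, hB2⟩
  · rw [← hc1, CF, Finset.mem_filter, Fintype.mem_piFinset]
    exact ⟨hCm, hC1⟩
  · ext i : 1
    fin_cases i
    · exact e0.symm
    · exact e1.symm
    · exact e2.symm
    · exact e3.symm

lemma err_bound (ℓ k : ℕ) (D : Finset (P1Pt Fq)) (hk : 3 * k ≤ ℓ) :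
    ∑ s ∈ ((SF ℓ k).filter (fun s : Fin 4 → MvPolynomial (Fin 2) Fq => s 3 ≠ 0)).filter
      (fun s => HorizRed k s), |(aD D s : ℚ)| ≤
      2 * (Fintype.card Fq : ℚ) ^ (3 * ℓ - 5 * k + 5) * 3 ^ D.card := by
  have hq : (2 : ℚ) ≤ Fintype.card Fq := by
    exact_mod_cast (Fintype.one_lt_card : 1 < Fintype.card Fq)
  set U : Finset ((_ : ℕ) × ((Fin 3 → MvPolynomial (Fin 2) Fq) × (Fin 2 → MvPolynomial (Fin 2) Fq)))
    := (Finset.range (ℓ - 3 * k + 1)).sigma (fun j => BF (ℓ - k - j) k ×ˢ CF (k + j) k) with hU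
  have hsub : ((SF ℓ k).filter (fun s : Fin 4 → MvPolynomial (Fin 2) Fq => s 3 ≠ 0)).filter
      (fun s => HorizRed k s) ⊆ U.image (fun x => mulBC x.2.1 x.2.2) := by
    intro s hs
    simp only [Finset.mem_filter] at hs
    obtain ⟨j, hj, B, hB, C, hC, rfl⟩ := red_mem ℓ k hk s hs.1.1 hs.1.2 hs.2
    rw [Finset.mem_image]
    refine ⟨⟨j, (B, C)⟩, ?_, rfl⟩
    rw [hU, Finset.mem_sigma, Finset.mem_product, Finset.mem_range]
    exact ⟨Nat.lt_succ_of_le hj, hB, hC⟩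
  calc _ ≤ ∑ s ∈ U.image (fun x => mulBC x.2.1 x.2.2), |(aD D s : ℚ)| :=
        Finset.sum_le_sum_of_subset_of_nonneg hsub (fun _ _ _ => abs_nonneg _)
    _ ≤ ∑ x ∈ U, |(aD D (mulBC x.2.1 x.2.2) : ℚ)| :=
        Finset.sum_image_le_of_nonneg (fun _ _ => abs_nonneg _)
    _ = ∑ j ∈ Finset.range (ℓ - 3 * k + 1), ∑ x ∈ (BF (ℓ - k - j) k ×ˢ CF (k + j) k :
          Finset ((Fin 3 → MvPolynomial (Fin 2) Fq) × _)), |(aD D (mulBC x.1 x.2) : ℚ)| := by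
        rw [hU, Finset.sum_sigma]
    _ ≤ ∑ j ∈ Finset.range (ℓ - 3 * k + 1),
          (Fintype.card Fq : ℚ) ^ (3 * ℓ - 5 * k + 5 - j) * 3 ^ D.card := by
        apply Finset.sum_le_sum
        intro j hj
        rw [Finset.mem_range] at hj
        have := BC_bound (ℓ - k - j) (k + j) k (by omega) (by omega) D
        have e : 3 * (ℓ - k - j) - 3 * k + 3 + (2 * (k + j) - k + 2) = 3 * ℓ - 5 * k + 5 - j := by
          omega
        rwa [e] at this
    _ ≤ _ := by
        rw [← Finset.sum_mul]
        apply mul_le_mul_of_nonneg_right _ (by positivity)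
        exact geom_bound _ hq _ _ (by omega)

lemma red_of_zero (ℓ k : ℕ) (s : Fin 4 → MvPolynomial (Fin 2) Fq)
    (hs : s ∈ SecSet 3 ℓ k) (h3 : s 3 = 0) : HorizRed k s := by
  by_cases h0 : s = 0
  · exact Or.inl h0
  right
  refine ⟨ℓ, 0, ![s 0, s 1, s 2], ![1, 0], ?_, ?_, ?_, ?_, ?_, ?_, ?_, ?_⟩
  · intro h
    apply h0
    ext i : 1
    fin_cases i
    · exact congrFun h 0
    · exact congrFun h 1
    · exact congrFun h 2
    · exact h3
  · intro h
    exact one_ne_zero (congrFun h 0)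
  · intro j
    fin_cases j
    · exact hs 0
    · exact hs 1
    · exact hs 2
  · intro j
    fin_cases j
    · refine ⟨?_, ?_⟩
      · simpa using MvPolynomial.isHomogeneous_one (Fin 2) Fq
      · intro h; simp at h
    · exact ⟨MvPolynomial.isHomogeneous_zero _ _ _, fun _ => rfl⟩
  · simp
  · simp
  · simp
  · simp [h3]

end Points

/-- Let `ℓ, k ≥ 0` and `D` a reduced effective divisor on `P¹`
with `ℓ ≥ 3k` and `ℓ ≥ deg D` (the small range).  Then
`Φ^{ir}(ℓ,k,D) = [q^{4ℓ−6k+4−deg D} − q^{3ℓ−3k+3}` if `ℓ−3k ≥ deg D`, else `0]`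
`+ O(3^{ω(D)} q^{3ℓ−5k})`, with implied constant depending only on `q`. -/
theorem statement_17 (Fq : Type) [Field Fq] [Fintype Fq] :
    ∃ K : ℕ, 0 < K ∧
      ∀ (ℓ k : ℕ) (D : Finset (P1Pt Fq)), 3 * k ≤ ℓ → degD D ≤ ℓ →
        |(∑ᶠ s ∈ {s ∈ SecSet 3 ℓ k | ¬ HorizRed k s}, aD D s) -
            (if 3 * k + degD D ≤ ℓ then
              (Fintype.card Fq : ℤ) ^ (4 * ℓ + 4 - 6 * k - degD D) -
                (Fintype.card Fq : ℤ) ^ (3 * ℓ + 3 - 3 * k)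
            else 0)| ≤
          (K : ℤ) * 3 ^ D.card * (Fintype.card Fq : ℤ) ^ (3 * ℓ - 5 * k) := by
  have hq : 0 < Fintype.card Fq := Fintype.card_pos
  refine ⟨2 * Fintype.card Fq ^ 5, by positivity, ?_⟩
  intro ℓ k D hk hD
  have hset : {s ∈ (SecSet 3 ℓ k : Set (Fin 4 → MvPolynomial (Fin 2) Fq)) | ¬ HorizRed k s} =
      ((((SF ℓ k).filter (fun s : Fin 4 → MvPolynomial (Fin 2) Fq => s 3 ≠ 0)).filter
        (fun s => ¬ HorizRed k s) : Finset (Fin 4 → MvPolynomial (Fin 2) Fq)) : Set (Fin 4 → MvPolynomial (Fin 2) Fq)) := by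
    ext s
    simp only [Set.mem_ofPred_eq, Finset.coe_filter, Finset.mem_filter, mem_SF hk]
    constructor
    · rintro ⟨h1, h2⟩
      exact ⟨⟨h1, fun h3 => h2 (red_of_zero ℓ k s h1 h3)⟩, h2⟩
    · rintro ⟨⟨h1, _⟩, h2⟩
      exact ⟨h1, h2⟩
  rw [hset, finsum_mem_coe_finset, ← main_sum ℓ k D hk hD]
  rw [← Finset.sum_filter_add_sum_filter_not
    ((SF ℓ k).filter (fun s : Fin 4 → MvPolynomial (Fin 2) Fq => s 3 ≠ 0)) (fun s => HorizRed k s)]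
  rw [sub_add_cancel_right, abs_neg]
  refine (Finset.abs_sum_le_sum_abs _ _).trans ?_
  have h := err_bound ℓ k D hk
  have h' : ∑ s ∈ ((SF ℓ k).filter (fun s : Fin 4 → MvPolynomial (Fin 2) Fq => s 3 ≠ 0)).filter
      (fun s => HorizRed k s), |aD D s| ≤
      2 * (Fintype.card Fq : ℤ) ^ (3 * ℓ - 5 * k + 5) * 3 ^ D.card := by exact_mod_cast h
  refine h'.trans (le_of_eq ?_)
  push_cast
  rw [pow_add]
  ring

end Stmt17
end
end

section
/- Let ℓ, k ≥ 0 be integers and D a reduced effective divisor on P¹ such that ℓ ≥ 3k and ℓ − 2k ≥ (deg D + k)/2. Then Φ^{ir}(ℓ,k,D) = q^{4ℓ−6k+4−deg D} + O(6^{ω(D)} q^{3ℓ−3k}), with implied constant depending only on q. In particular, if additionally deg D > ℓ (the medium range), then Φ^{ir}(ℓ,k,D) = O(6^{ω(D)} q^{3ℓ−3k}). -/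
/-!
Statement 18.  The estimate for the adjusted root-counting sum `Φ^{ir}(ℓ,k,D)` over
the horizontally irreducible binary cubic forms on the Hirzebruch surface `F_k`
over `F_q` under the condition `ℓ − 2k ≥ (deg D + k)/2`, and the resulting
medium-range bound when moreover `deg D > ℓ`.
-/
open scoped Classical

noncomputable section

namespace Stmt18

/-- Closed points of the projective line `P¹` over `F_q`: `none` is the point at
infinity, and `some p` corresponds to the monic irreducible polynomial `p`. -/
abbrev P1Pt (Fq : Type) [Field Fq] : Type :=
  Option {p : Polynomial Fq // p.Monic ∧ Irreducible p}

variable {Fq : Type} [Field Fq]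

/-- The degree of a closed point of `P¹`. -/
def P1Pt.deg : P1Pt Fq → ℕ
  | none => 1
  | some p => p.1.natDegree

/-- The residue field of a closed point of `P¹`. -/
def P1Pt.Res : P1Pt Fq → Type
  | none => Fq
  | some p => AdjoinRoot p.1

instance (P : P1Pt Fq) : CommRing (P1Pt.Res P) :=
  match P with
  | none => inferInstanceAs (CommRing Fq)
  | some p => inferInstanceAs (CommRing (AdjoinRoot p.1))

instance (P : P1Pt Fq) : Algebra Fq (P1Pt.Res P) :=
  match P with
  | none => Algebra.id Fq
  | some p => inferInstanceAs (Algebra Fq (AdjoinRoot p.1))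

/-- The homogeneous coordinates `(t₀ : t₁)` of a closed point of `P¹`, in its residue
field: `(1 : 0)` for the point at infinity, and `(θ : 1)` with `θ` the root of `p`
for the point `some p`. -/
def P1Pt.coords : (P : P1Pt Fq) → Fin 2 → P1Pt.Res P
  | none => ![1, 0]
  | some p => ![AdjoinRoot.root p.1, 1]

/-- Evaluate a polynomial in the homogeneous coordinates `t₀, t₁` of the base `P¹`
at a closed point `P`, in the residue field of `P`. -/
def resEval (P : P1Pt Fq) (A : MvPolynomial (Fin 2) Fq) : P1Pt.Res P :=
  MvPolynomial.aeval (P1Pt.coords P) A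

/-- `r_P(s)`: the number of relative degree one points of the fiber of `F_k → P¹`
over `P` at which the binary cubic form `s = (A₀, A₁, A₂, A₃)` vanishes.  These
points are the `(z : 1)` with `z` in the residue field of `P`, together with `(1 : 0)`. -/
def rP (P : P1Pt Fq) (s : Fin 4 → MvPolynomial (Fin 2) Fq) : ℕ :=
  Nat.card {z : P1Pt.Res P //
      resEval P (s 0) * z ^ 3 + resEval P (s 1) * z ^ 2
        + resEval P (s 2) * z + resEval P (s 3) = 0} +
    (if resEval P (s 0) = 0 then 1 else 0)

/-- The degree of a reduced effective divisor (a finite set of closed points) on `P¹`. -/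
def degD (D : Finset (P1Pt Fq)) : ℕ := ∑ P ∈ D, P1Pt.deg P

/-- `r_D(s) = ∏_{P ∣ D} r_P(s)`. -/
def rD (D : Finset (P1Pt Fq)) (s : Fin 4 → MvPolynomial (Fin 2) Fq) : ℕ :=
  ∏ P ∈ D, rP P s

/-- `a_D(s) = ∏_{P ∣ D} (r_P(s) − 1)`. -/
def aD (D : Finset (P1Pt Fq)) (s : Fin 4 → MvPolynomial (Fin 2) Fq) : ℤ :=
  ∏ P ∈ D, ((rP P s : ℤ) - 1)

/-- `p` is homogeneous of (possibly negative) degree `d`; for `d < 0` this forces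
`p = 0`. -/
def IsHomOfDeg (p : MvPolynomial (Fin 2) Fq) (d : ℤ) : Prop :=
  p.IsHomogeneous d.toNat ∧ (d < 0 → p = 0)

/-- The space of global sections of `O(m, ℓ)` on the Hirzebruch surface `F_k`,
viewed as tuples `(A₀, …, A_m)` of binary forms with `A_i` homogeneous of degree
`ℓ − i·k`. -/
def SecSet (m ℓ k : ℕ) : Set (Fin (m + 1) → MvPolynomial (Fin 2) Fq) :=
  {s | ∀ i : Fin (m + 1), IsHomOfDeg (s i) ((ℓ : ℤ) - (i : ℕ) * k)}

/-- A binary cubic form `s ∈ H⁰(F_k, O(3,ℓ))` is horizontally reducible iff it is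
zero or factors as a product of a nonzero quadratic and a nonzero linear form in
`x, y` with homogeneous polynomial coefficients. -/
def HorizRed (k : ℕ) (s : Fin 4 → MvPolynomial (Fin 2) Fq) : Prop :=
  s = 0 ∨ ∃ (b c : ℤ) (B : Fin 3 → MvPolynomial (Fin 2) Fq)
      (C : Fin 2 → MvPolynomial (Fin 2) Fq),
    B ≠ 0 ∧ C ≠ 0 ∧
    (∀ j : Fin 3, IsHomOfDeg (B j) (b - (j : ℕ) * k)) ∧
    (∀ j : Fin 2, IsHomOfDeg (C j) (c - (j : ℕ) * k)) ∧
    s 0 = B 0 * C 0 ∧ s 1 = B 0 * C 1 + B 1 * C 0 ∧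
    s 2 = B 1 * C 1 + B 2 * C 0 ∧ s 3 = B 2 * C 1



/-- two-variable ring -/
abbrev RR (Fq : Type) [Field Fq] := MvPolynomial (Fin 2) Fq

instance resDomain (P : P1Pt Fq) : IsDomain (P1Pt.Res P) :=
  match P with
  | none => inferInstanceAs (IsDomain Fq)
  | some p => by
      have : Fact (Irreducible p.1) := ⟨p.2.2⟩
      exact inferInstanceAs (IsDomain (AdjoinRoot p.1))

instance resFin (P : P1Pt Fq) : Module.Finite Fq (P1Pt.Res P) :=
  match P with
  | none => inferInstanceAs (Module.Finite Fq Fq)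
  | some p => by
      exact (AdjoinRoot.powerBasis p.2.2.ne_zero).finite

theorem resFinrank (P : P1Pt Fq) : Module.finrank Fq (P1Pt.Res P) = P.deg :=
  match P with
  | none => Module.finrank_self Fq
  | some p => by
      have := (AdjoinRoot.powerBasis p.2.2.ne_zero).finrank
      exact this.trans (AdjoinRoot.powerBasis_dim _)

/-- evaluation as algebra hom -/
def ev (P : P1Pt Fq) : RR Fq →ₐ[Fq] P1Pt.Res P := MvPolynomial.aeval (P1Pt.coords P)

theorem resEval_eq (P : P1Pt Fq) (A : RR Fq) : resEval P A = ev P A := rfl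

/-- dehomogenization -/
def deh : RR Fq →ₐ[Fq] Polynomial Fq := MvPolynomial.aeval ![Polynomial.X, 1]

theorem deh_natDegree {f : RR Fq} {n : ℕ} (hf : f.IsHomogeneous n) : (deh f).natDegree ≤ n := by
  unfold deh
  rw [f.as_sum, map_sum]
  apply Polynomial.natDegree_sum_le_of_forall_le
  intro m hm
  have hw : m.weight 1 = n := hf (by simpa using hm)
  rw [MvPolynomial.aeval_monomial, ← Polynomial.C_eq_algebraMap]
  refine (Polynomial.natDegree_C_mul_le _ _).trans ?_
  simp [Finsupp.weight_apply, Finsupp.sum_fintype, Fin.sum_univ_two] at hw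
  simp [Finsupp.prod_fintype, Fin.prod_univ_two]
  omega

theorem hom_deh {f : RR Fq} {n : ℕ} (hf : f.IsHomogeneous n) : (deh f).homogenize n = f :=
  Polynomial.homogenize_eq_of_isHomogeneous hf rfl

theorem ev_none_hom (g : Polynomial Fq) (n : ℕ) :
    ev (none : P1Pt Fq) (g.homogenize n) = g.coeff n := by
  change MvPolynomial.aeval (![1, 0] : Fin 2 → Fq) (g.homogenize n) = g.coeff n
  unfold Polynomial.homogenize
  rw [map_sum, Finset.sum_eq_single (n, 0)]
  · simp [MvPolynomial.aeval_monomial, Finsupp.prod_fintype, Fin.prod_univ_two]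
  · rintro ⟨a, b⟩ h1 h2
    have : b ≠ 0 := by
      rintro rfl
      apply h2
      simpa using h1
    simp [MvPolynomial.aeval_monomial, Finsupp.prod_fintype, Fin.prod_univ_two, this]
  · simp

theorem ev_some (p : {p : Polynomial Fq // p.Monic ∧ Irreducible p}) (f : RR Fq) :
    ev (some p : P1Pt Fq) f = AdjoinRoot.mk p.1 (deh f) := by
  change MvPolynomial.aeval (![AdjoinRoot.root p.1, 1] : Fin 2 → AdjoinRoot p.1) f = _
  have : (MvPolynomial.aeval (![AdjoinRoot.root p.1, 1] : Fin 2 → AdjoinRoot p.1))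
    = (AdjoinRoot.mkₐ p.1).comp (deh : RR Fq →ₐ[Fq] _) := by
    apply MvPolynomial.algHom_ext
    intro i
    fin_cases i <;> simp [deh]
  rw [this]; rfl

theorem ev_some_iff (p : {p : Polynomial Fq // p.Monic ∧ Irreducible p}) (f : RR Fq) :
    ev (some p : P1Pt Fq) f = 0 ↔ p.1 ∣ deh f := by
  rw [ev_some]
  exact AdjoinRoot.mk_eq_zero

theorem ev_none_iff (g : Polynomial Fq) (n : ℕ) :
    ev (none : P1Pt Fq) (g.homogenize n) = 0 ↔ g.coeff n = 0 := by
  rw [ev_none_hom]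
  exact Iff.rfl

/-- homogeneous prime at a point -/
def pip : P1Pt Fq → RR Fq
  | none => MvPolynomial.X 1
  | some p => p.1.homogenize p.1.natDegree

theorem pip_hom (P : P1Pt Fq) : (pip P).IsHomogeneous P.deg :=
  match P with
  | none => MvPolynomial.isHomogeneous_X _ _
  | some _ => Polynomial.isHomogeneous_homogenize _

theorem deh_pip_none : deh (pip (none : P1Pt Fq)) = 1 := by simp [deh, pip]
theorem deh_pip_some (p : {p : Polynomial Fq // p.Monic ∧ Irreducible p}) :
    deh (pip (some p : P1Pt Fq)) = p.1 :=
  Polynomial.aeval_homogenize_X_one _ le_rfl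

theorem pip_ne (P : P1Pt Fq) : pip P ≠ 0 :=
  match P with
  | none => MvPolynomial.X_ne_zero _
  | some p => by
    intro h
    have := deh_pip_some p
    rw [h, map_zero] at this
    exact p.2.2.ne_zero this.symm

theorem deg_pos (P : P1Pt Fq) : 0 < P.deg :=
  match P with
  | none => Nat.one_pos
  | some p => p.2.2.natDegree_pos

theorem ev_pip_self (P : P1Pt Fq) : ev P (pip P) = 0 :=
  match P with
  | none => by
    change MvPolynomial.aeval (![1, 0] : Fin 2 → Fq) (MvPolynomial.X 1) = 0
    simp
  | some p => by
    rw [ev_some_iff, deh_pip_some]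

theorem ev_pip_ne (P Q : P1Pt Fq) (h : P ≠ Q) : ev Q (pip P) ≠ 0 := by
  rcases Q with _ | q
  · rcases P with _ | p
    · exact absurd rfl h
    · change ¬ (ev none (p.1.homogenize p.1.natDegree) = 0)
      rw [ev_none_iff]
      have := p.2.1
      rw [Polynomial.Monic, Polynomial.leadingCoeff] at this
      rw [this]; exact one_ne_zero
  · rcases P with _ | p
    · rw [ne_eq, ev_some_iff, deh_pip_none]
      exact fun h => q.2.2.not_isUnit (isUnit_of_dvd_one h)
    · rw [ne_eq, ev_some_iff, deh_pip_some]
      intro h0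
      have ha := (q.2.2.associated_of_dvd p.2.2 h0)
      have := Polynomial.eq_of_monic_of_associated q.2.1 p.2.1 ha
      exact h (by rw [Subtype.ext this])

theorem ev_dvd (P : P1Pt Fq) {f : RR Fq} {n : ℕ} (hf : f.IsHomogeneous n) (hf0 : f ≠ 0)
    (h : ev P f = 0) : ∃ g : RR Fq, ∃ m : ℕ, g.IsHomogeneous m ∧ f = pip P * g ∧ n = P.deg + m := by
  have hd0 : deh f ≠ 0 := by
    intro h0
    apply hf0
    rw [← hom_deh hf, h0, Polynomial.homogenize_zero]
  rcases P with _ | p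
  · rw [← hom_deh hf, ev_none_iff] at h
    have hlt : (deh f).natDegree < n := by
      refine lt_of_le_of_ne (deh_natDegree hf) ?_
      rintro rfl
      exact hd0 (Polynomial.leadingCoeff_eq_zero.1 h)
    obtain ⟨m, rfl⟩ : ∃ m, n = 1 + m := ⟨n - 1, by omega⟩
    refine ⟨(deh f).homogenize m, m, Polynomial.isHomogeneous_homogenize _, ?_, rfl⟩
    conv_lhs => rw [← hom_deh hf, ← one_mul (deh f)]
    rw [Polynomial.homogenize_mul _ _ (by simp) (by omega), Polynomial.homogenize_one]
    simp [pip]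
  · rw [ev_some_iff] at h
    obtain ⟨g, hg⟩ := h
    have hg0 : g ≠ 0 := by rintro rfl; simp at hg; exact hd0 hg
    have hdeg : (deh f).natDegree = p.1.natDegree + g.natDegree := by
      rw [hg, Polynomial.natDegree_mul p.2.2.ne_zero hg0]
    have := deh_natDegree hf
    obtain ⟨m, rfl⟩ : ∃ m, n = p.1.natDegree + m := ⟨n - p.1.natDegree, by omega⟩
    refine ⟨g.homogenize m, m, Polynomial.isHomogeneous_homogenize _, ?_, rfl⟩
    conv_lhs => rw [← hom_deh hf, hg]
    rw [Polynomial.homogenize_mul _ _ le_rfl (by omega)]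
    rfl

theorem exists_zero {f : RR Fq} {n : ℕ} (hf : f.IsHomogeneous n) (hn : 0 < n) :
    ∃ P : P1Pt Fq, ev P f = 0 := by
  by_cases h : (deh f).coeff n = 0
  · refine ⟨none, ?_⟩
    rw [← hom_deh hf, ev_none_iff]; exact h
  · have hnu : ¬ IsUnit (deh f) := by
      intro hu
      have := Polynomial.natDegree_eq_zero_of_isUnit hu
      have h2 := Polynomial.le_natDegree_of_ne_zero h
      omega
    obtain ⟨g, hg, hgd⟩ := Polynomial.exists_monic_irreducible_factor _ hnu
    exact ⟨some ⟨g, hg, hgd.1⟩, (ev_some_iff _ _).2 hgd.2⟩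


/-- homogeneous forms of integer degree -/
def H (Fq : Type) [Field Fq] (n : ℤ) : Submodule Fq (RR Fq) where
  carrier := {p | IsHomOfDeg p n}
  zero_mem' := ⟨MvPolynomial.isHomogeneous_zero _ _ _, fun _ => rfl⟩
  add_mem' := fun ha hb => ⟨ha.1.add hb.1, fun h => by rw [ha.2 h, hb.2 h, add_zero]⟩
  smul_mem' := fun c x hx => ⟨by
    have := (MvPolynomial.homogeneousSubmodule (Fin 2) Fq n.toNat).smul_mem c hx.1
    exact this, fun h => by rw [hx.2 h, smul_zero]⟩

theorem mem_H {n : ℤ} {f : RR Fq} : f ∈ H Fq n ↔ IsHomOfDeg f n := Iff.rfl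

theorem mem_H_nat {n : ℕ} {f : RR Fq} : f ∈ H Fq (n : ℤ) ↔ f.IsHomogeneous n := by
  rw [mem_H, IsHomOfDeg]
  simp

theorem eq_zero_of_neg {n : ℤ} (hn : n < 0) {f : RR Fq} (hf : f ∈ H Fq n) : f = 0 := hf.2 hn

theorem nonneg_of_ne {n : ℤ} {f : RR Fq} (hf : f ∈ H Fq n) (h0 : f ≠ 0) : 0 ≤ n := by
  by_contra h
  exact h0 (eq_zero_of_neg (by omega) hf)

theorem mul_mem_H {a b : ℤ} {f g : RR Fq} (hf : f ∈ H Fq a) (hg : g ∈ H Fq b) :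
    f * g ∈ H Fq (a + b) := by
  rcases lt_or_ge a 0 with ha | ha
  · rw [eq_zero_of_neg ha hf, zero_mul]; exact Submodule.zero_mem _
  rcases lt_or_ge b 0 with hb | hb
  · rw [eq_zero_of_neg hb hg, mul_zero]; exact Submodule.zero_mem _
  lift a to ℕ using ha
  lift b to ℕ using hb
  rw [mem_H_nat] at hf hg
  rw [← Nat.cast_add, mem_H_nat]
  exact hf.mul hg

theorem mul_mem_H' {a b c : ℤ} {f g : RR Fq} (hf : f ∈ H Fq a) (hg : g ∈ H Fq b)
    (h : a + b = c) : f * g ∈ H Fq c := h ▸ mul_mem_H hf hg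

theorem degree_unique {a b : ℤ} {f : RR Fq} (hf : f ∈ H Fq a) (hg : f ∈ H Fq b) (h0 : f ≠ 0) :
    a = b := by
  have ha := nonneg_of_ne hf h0
  have hb := nonneg_of_ne hg h0
  lift a to ℕ using ha
  lift b to ℕ using hb
  rw [mem_H_nat] at hf hg
  rw [hf.inj_right hg h0]

theorem pip_mem (P : P1Pt Fq) : pip P ∈ H Fq (P.deg : ℤ) := mem_H_nat.2 (pip_hom P)

theorem ev_dvdZ (P : P1Pt Fq) {f : RR Fq} {n : ℤ} (hf : f ∈ H Fq n)
    (h : ev P f = 0) : ∃ g ∈ H Fq (n - P.deg), f = pip P * g := by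
  by_cases h0 : f = 0
  · exact ⟨0, Submodule.zero_mem _, by rw [h0, mul_zero]⟩
  have hn := nonneg_of_ne hf h0
  lift n to ℕ using hn
  obtain ⟨g, m, hg, hfg, hm⟩ := ev_dvd P (mem_H_nat.1 hf) h0 h
  refine ⟨g, ?_, hfg⟩
  have : (n : ℤ) - P.deg = (m : ℕ) := by omega
  rw [this, mem_H_nat]
  exact hg

theorem exists_zeroZ {f : RR Fq} {n : ℤ} (hf : f ∈ H Fq n) (hn : 0 < n) :
    ∃ P : P1Pt Fq, ev P f = 0 := by
  lift n to ℕ using hn.le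
  exact exists_zero (mem_H_nat.1 hf) (by omega)

theorem const_of_H0 {f : RR Fq} (hf : f ∈ H Fq 0) : ∃ c : Fq, f = MvPolynomial.C c := by
  have : f.IsHomogeneous 0 := mem_H_nat.1 (by exact_mod_cast hf)
  exact ⟨_, MvPolynomial.totalDegree_eq_zero_iff_eq_C.1
    (Nat.le_zero.1 this.totalDegree_le)⟩

/-- dehomogenization equivalence -/
def dehEquiv (n : ℕ) : H Fq (n : ℤ) ≃ₗ[Fq] Polynomial.degreeLT Fq (n + 1) :=
  LinearEquiv.ofBijective
    (LinearMap.codRestrict (Polynomial.degreeLT Fq (n + 1))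
      ((deh (Fq := Fq)).toLinearMap ∘ₗ (H Fq (n : ℤ)).subtype)
      (fun f => by
        rw [Polynomial.mem_degreeLT]
        have := deh_natDegree (mem_H_nat.1 f.2)
        refine lt_of_le_of_lt Polynomial.degree_le_natDegree ?_
        exact_mod_cast Nat.lt_succ_of_le this))
    ⟨by
      intro f g hfg
      have h1 : deh f.1 = deh g.1 := congrArg Subtype.val hfg
      apply Subtype.ext
      rw [← hom_deh (mem_H_nat.1 f.2), h1, hom_deh (mem_H_nat.1 g.2)],
     by
      rintro ⟨g, hg⟩
      have hd : g.natDegree ≤ n := by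
        rw [Polynomial.mem_degreeLT] at hg
        by_cases h0 : g = 0
        · simp [h0]
        have := (Polynomial.natDegree_lt_iff_degree_lt h0).2 hg
        omega
      refine ⟨⟨g.homogenize n, mem_H_nat.2 (Polynomial.isHomogeneous_homogenize _)⟩, ?_⟩
      apply Subtype.ext
      exact Polynomial.aeval_homogenize_X_one _ hd⟩

theorem H_neg_bot {n : ℤ} (hn : n < 0) : H Fq n = ⊥ := by
  rw [eq_bot_iff]
  intro f hf
  exact eq_zero_of_neg hn hf

instance HFin (n : ℤ) : Module.Finite Fq (H Fq n) := by
  rcases lt_or_ge n 0 with hn | hn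
  · rw [H_neg_bot hn]; infer_instance
  · lift n to ℕ using hn
    have := Module.Finite.equiv (Polynomial.degreeLTEquiv Fq (n + 1)).symm
    exact Module.Finite.equiv (dehEquiv n).symm

theorem finrank_H (n : ℤ) : Module.finrank Fq (H Fq n) = (n + 1).toNat := by
  rcases lt_or_ge n 0 with hn | hn
  · rw [H_neg_bot hn, finrank_bot]; omega
  · lift n to ℕ using hn
    rw [(dehEquiv n).finrank_eq, (Polynomial.degreeLTEquiv Fq (n + 1)).finrank_eq]
    simp

/-- forms vanishing on D -/
def KK (n : ℤ) (D : Finset (P1Pt Fq)) : Submodule Fq (RR Fq) where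
  carrier := {f | f ∈ H Fq n ∧ ∀ P ∈ D, ev P f = 0}
  zero_mem' := ⟨Submodule.zero_mem _, fun _ _ => map_zero _⟩
  add_mem' := fun ha hb => ⟨Submodule.add_mem _ ha.1 hb.1, fun P hP => by
    rw [map_add, ha.2 P hP, hb.2 P hP, add_zero]⟩
  smul_mem' := fun c x hx => ⟨Submodule.smul_mem _ c hx.1, fun P hP => by
    rw [map_smul, hx.2 P hP, smul_zero]⟩

theorem mem_KK {n : ℤ} {D : Finset (P1Pt Fq)} {f : RR Fq} :
    f ∈ KK n D ↔ f ∈ H Fq n ∧ ∀ P ∈ D, ev P f = 0 := Iff.rfl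

theorem KK_insert (n : ℤ) (D : Finset (P1Pt Fq)) (P : P1Pt Fq) (hP : P ∉ D) :
    KK n (insert P D) = (KK (n - P.deg) D).map (LinearMap.mulLeft Fq (pip P)) := by
  ext f
  rw [Submodule.mem_map]
  constructor
  · rintro ⟨hf, hv⟩
    obtain ⟨g, hg, rfl⟩ := ev_dvdZ P hf (hv P (Finset.mem_insert_self _ _))
    refine ⟨g, ⟨hg, fun Q hQ => ?_⟩, rfl⟩
    have := hv Q (Finset.mem_insert_of_mem hQ)
    rw [map_mul] at this
    refine (mul_eq_zero.1 this).resolve_left (ev_pip_ne P Q ?_)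
    rintro rfl; exact hP hQ
  · rintro ⟨g, ⟨hg, hv⟩, rfl⟩
    refine ⟨mul_mem_H' (pip_mem P) hg (by ring), fun Q hQ => ?_⟩
    rw [LinearMap.mulLeft_apply, map_mul]
    rcases Finset.mem_insert.1 hQ with rfl | hQ
    · rw [ev_pip_self, zero_mul]
    · rw [hv Q hQ, mul_zero]

theorem finrank_KK (D : Finset (P1Pt Fq)) : ∀ n : ℤ,
    Module.finrank Fq (KK n D) = (n + 1 - degD D).toNat := by
  induction D using Finset.induction_on with
  | empty =>
    intro n
    have : KK n (∅ : Finset (P1Pt Fq)) = H Fq n := by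
      ext f; simp [mem_KK]
    rw [this, finrank_H]; simp [degD]
  | insert P D hP ih =>
    intro n
    rw [KK_insert n D P hP]
    have hinj : Function.Injective (LinearMap.mulLeft Fq (pip P)) :=
      fun a b h => mul_left_cancel₀ (pip_ne P) h
    rw [← (Submodule.equivMapOfInjective _ hinj (KK (n - P.deg) D)).finrank_eq, ih]
    congr 1
    rw [degD, degD, Finset.sum_insert hP]
    push_cast; ring

theorem deg_le_of_vanish {n : ℤ} {D : Finset (P1Pt Fq)} {f : RR Fq} (hf : f ∈ H Fq n)
    (h0 : f ≠ 0) (hv : ∀ P ∈ D, ev P f = 0) : (degD D : ℤ) ≤ n := by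
  by_contra h
  have h1 : Module.finrank Fq (KK n D) = 0 := by rw [finrank_KK]; omega
  have : Module.Finite Fq (KK n D) :=
    Submodule.finiteDimensional_of_le (S₂ := H Fq n) (fun f hf => hf.1)
  have h2 := Submodule.finrank_eq_zero.1 h1
  have h3 : f ∈ KK n D := ⟨hf, hv⟩
  rw [h2] at h3
  exact h0 h3

theorem finrank_pi_res (D : Finset (P1Pt Fq)) :
    Module.finrank Fq ((P : ↥D) → P1Pt.Res P.1) = degD D := by
  rw [Module.finrank_pi_fintype]
  simp only [resFinrank]
  exact Finset.sum_coe_sort D P1Pt.deg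

/-- joint evaluation -/
def evD (n : ℤ) (D : Finset (P1Pt Fq)) : H Fq n →ₗ[Fq] ((P : ↥D) → P1Pt.Res P.1) :=
  LinearMap.pi (fun P => (ev P.1).toLinearMap ∘ₗ (H Fq n).subtype)

theorem evD_surj {n : ℤ} {D : Finset (P1Pt Fq)} (h : (degD D : ℤ) ≤ n + 1) :
    Function.Surjective (evD n D) := by
  rw [← LinearMap.range_eq_top]
  apply Submodule.eq_top_of_finrank_eq
  rw [finrank_pi_res]
  have h1 := LinearMap.finrank_range_add_finrank_ker (evD n D)
  have h2 : Module.finrank Fq (LinearMap.ker (evD n D)) = Module.finrank Fq (KK n D) := by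
    have : KK n D = (LinearMap.ker (evD n D)).map (H Fq n).subtype := by
      ext f
      constructor
      · rintro ⟨hf, hv⟩
        exact ⟨⟨f, hf⟩, by
          rw [SetLike.mem_coe, LinearMap.mem_ker]
          funext P
          exact hv P.1 P.2, rfl⟩
      · rintro ⟨g, hg, rfl⟩
        refine ⟨g.2, fun P hP => ?_⟩
        exact congrFun (LinearMap.mem_ker.1 hg) ⟨P, hP⟩
    rw [this]
    exact (Submodule.equivMapOfInjective _ (Submodule.injective_subtype _) _).finrank_eq
  rw [h2, finrank_KK, finrank_H] at h1
  omega

theorem exists_interp {n : ℤ} {D : Finset (P1Pt Fq)} (h : (degD D : ℤ) ≤ n + 1)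
    (τ : (P : ↥D) → P1Pt.Res P.1) : ∃ f ∈ H Fq n, ∀ P : ↥D, ev P.1 f = τ P := by
  obtain ⟨f, hf⟩ := evD_surj h τ
  exact ⟨f.1, f.2, fun P => congrFun hf P⟩


/-- tuples with components in given submodules -/
def Tup {n : ℕ} (W : Fin n → Submodule Fq (RR Fq)) : Submodule Fq (Fin n → RR Fq) where
  carrier := {s | ∀ i, s i ∈ W i}
  zero_mem' := fun i => (W i).zero_mem
  add_mem' := fun ha hb i => (W i).add_mem (ha i) (hb i)
  smul_mem' := fun c _ hx i => (W i).smul_mem c (hx i)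

theorem mem_Tup {n : ℕ} {W : Fin n → Submodule Fq (RR Fq)} {s : Fin n → RR Fq} :
    s ∈ Tup W ↔ ∀ i, s i ∈ W i := Iff.rfl

/-- tuples as a product -/
def TupEquiv {n : ℕ} (W : Fin n → Submodule Fq (RR Fq)) : Tup W ≃ₗ[Fq] ((i : Fin n) → W i) where
  toFun s i := ⟨s.1 i, s.2 i⟩
  invFun t := ⟨fun i => (t i).1, fun i => (t i).2⟩
  left_inv _ := rfl
  right_inv _ := rfl
  map_add' _ _ := rfl
  map_smul' _ _ := rfl

theorem finite_Tup {n : ℕ} (W : Fin n → Submodule Fq (RR Fq)) [∀ i, Module.Finite Fq (W i)] :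
    Module.Finite Fq (Tup W) := Module.Finite.equiv (TupEquiv W).symm

theorem finrank_Tup {n : ℕ} (W : Fin n → Submodule Fq (RR Fq)) [∀ i, Module.Finite Fq (W i)] :
    Module.finrank Fq (Tup W) = ∑ i, Module.finrank Fq (W i) := by
  rw [(TupEquiv W).finrank_eq, Module.finrank_pi_fintype]

/-- sections -/
def Sec (Fq : Type) [Field Fq] (m : ℕ) (b : ℤ) (k : ℕ) : Submodule Fq (Fin (m + 1) → RR Fq) :=
  Tup (fun i => H Fq (b - ((i : ℕ) : ℤ) * k))

theorem mem_Sec {m : ℕ} {b : ℤ} {k : ℕ} {s : Fin (m + 1) → RR Fq} :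
    s ∈ Sec Fq m b k ↔ ∀ i : Fin (m + 1), s i ∈ H Fq (b - ((i : ℕ) : ℤ) * k) := Iff.rfl

instance SecFin (m : ℕ) (b : ℤ) (k : ℕ) : Module.Finite Fq (Sec Fq m b k) := finite_Tup _

theorem finrank_Sec (m : ℕ) (b : ℤ) (k : ℕ) : Module.finrank Fq (Sec Fq m b k) =
    ∑ i : Fin (m + 1), (b - ((i : ℕ) : ℤ) * k + 1).toNat := by
  rw [Sec, finrank_Tup]
  simp only [finrank_H]

theorem mem_Sec1 {b : ℤ} {k : ℕ} {s : Fin 2 → RR Fq} :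
    s ∈ Sec Fq 1 b k ↔ s 0 ∈ H Fq b ∧ s 1 ∈ H Fq (b - k) := by
  rw [mem_Sec]
  simp [Fin.forall_fin_succ]

theorem mem_Sec2 {b : ℤ} {k : ℕ} {s : Fin 3 → RR Fq} :
    s ∈ Sec Fq 2 b k ↔ s 0 ∈ H Fq b ∧ s 1 ∈ H Fq (b - k) ∧ s 2 ∈ H Fq (b - 2 * k) := by
  rw [mem_Sec]
  simp [Fin.forall_fin_succ]

theorem mem_Sec3 {b : ℤ} {k : ℕ} {s : Fin 4 → RR Fq} :
    s ∈ Sec Fq 3 b k ↔ s 0 ∈ H Fq b ∧ s 1 ∈ H Fq (b - k) ∧ s 2 ∈ H Fq (b - 2 * k)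
      ∧ s 3 ∈ H Fq (b - 3 * k) := by
  rw [mem_Sec]
  simp [Fin.forall_fin_succ]

theorem finrank_Sec1 (b : ℤ) (k : ℕ) : Module.finrank Fq (Sec Fq 1 b k) =
    (b + 1).toNat + (b - k + 1).toNat := by
  rw [finrank_Sec]
  simp [Fin.sum_univ_succ]

theorem finrank_Sec2 (b : ℤ) (k : ℕ) : Module.finrank Fq (Sec Fq 2 b k) =
    (b + 1).toNat + ((b - k + 1).toNat + (b - 2 * k + 1).toNat) := by
  rw [finrank_Sec]
  simp [Fin.sum_univ_succ]

theorem finrank_Sec3 (b : ℤ) (k : ℕ) : Module.finrank Fq (Sec Fq 3 b k) =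
    (b + 1).toNat + ((b - k + 1).toNat + ((b - 2 * k + 1).toNat + (b - 3 * k + 1).toNat)) := by
  rw [finrank_Sec]
  simp [Fin.sum_univ_succ]

/-- x-coordinate of a point of the fibre -/
def px {P : P1Pt Fq} : Option P.Res → P.Res
  | none => 1
  | some z => z

/-- y-coordinate of a point of the fibre -/
def py {P : P1Pt Fq} : Option P.Res → P.Res
  | none => 0
  | some _ => 1

/-- value of a form at a point of the fibre -/
def vl (m : ℕ) (P : P1Pt Fq) (z : Option P.Res) : (Fin (m + 1) → RR Fq) →ₗ[Fq] P.Res where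
  toFun s := ∑ i : Fin (m + 1), ev P (s i) * (px z ^ (m - (i : ℕ)) * py z ^ (i : ℕ))
  map_add' s t := by simp [add_mul, Finset.sum_add_distrib]
  map_smul' c s := by simp [Finset.smul_sum]

theorem vl1 (P : P1Pt Fq) (z : Option P.Res) (s : Fin 2 → RR Fq) :
    vl 1 P z s = ev P (s 0) * px z + ev P (s 1) * py z := by
  simp [vl, Fin.sum_univ_succ]

theorem vl2 (P : P1Pt Fq) (z : Option P.Res) (s : Fin 3 → RR Fq) :
    vl 2 P z s = ev P (s 0) * px z ^ 2 + ev P (s 1) * (px z * py z) + ev P (s 2) * py z ^ 2 := by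
  simp [vl, Fin.sum_univ_succ, add_assoc]

theorem vl3 (P : P1Pt Fq) (z : Option P.Res) (s : Fin 4 → RR Fq) :
    vl 3 P z s = ev P (s 0) * px z ^ 3 + ev P (s 1) * (px z ^ 2 * py z)
      + ev P (s 2) * (px z * py z ^ 2) + ev P (s 3) * py z ^ 3 := by
  simp [vl, Fin.sum_univ_succ, add_assoc]

/-- joint evaluation of sections on a section of the fibre bundle -/
def vlD (m : ℕ) (D : Finset (P1Pt Fq)) (σ : (P : P1Pt Fq) → Option P.Res) :
    (Fin (m + 1) → RR Fq) →ₗ[Fq] ((P : ↥D) → P1Pt.Res P.1) :=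
  LinearMap.pi (fun P => vl m P.1 (σ P.1))

/-- sections vanishing on σ -/
def VS (m : ℕ) (b : ℤ) (k : ℕ) (D : Finset (P1Pt Fq)) (σ : (P : P1Pt Fq) → Option P.Res) :
    Submodule Fq (Fin (m + 1) → RR Fq) where
  carrier := {s | s ∈ Sec Fq m b k ∧ ∀ P ∈ D, vl m P (σ P) s = 0}
  zero_mem' := ⟨Submodule.zero_mem _, fun _ _ => map_zero _⟩
  add_mem' := fun ha hb => ⟨Submodule.add_mem _ ha.1 hb.1, fun P hP => by
    rw [map_add, ha.2 P hP, hb.2 P hP, add_zero]⟩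
  smul_mem' := fun c x hx => ⟨Submodule.smul_mem _ c hx.1, fun P hP => by
    rw [map_smul, hx.2 P hP, smul_zero]⟩

theorem mem_VS {m : ℕ} {b : ℤ} {k : ℕ} {D : Finset (P1Pt Fq)} {σ : (P : P1Pt Fq) → Option P.Res}
    {s : Fin (m + 1) → RR Fq} :
    s ∈ VS m b k D σ ↔ s ∈ Sec Fq m b k ∧ ∀ P ∈ D, vl m P (σ P) s = 0 := Iff.rfl

instance VSFin (m : ℕ) (b : ℤ) (k : ℕ) (D : Finset (P1Pt Fq)) (σ : (P : P1Pt Fq) → Option P.Res) :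
    Module.Finite Fq (VS m b k D σ) :=
  Submodule.finiteDimensional_of_le (S₂ := Sec Fq m b k) (fun _ hf => hf.1)

theorem VS_eq (m : ℕ) (b : ℤ) (k : ℕ) (D : Finset (P1Pt Fq)) (σ : (P : P1Pt Fq) → Option P.Res) :
    VS m b k D σ = (LinearMap.ker (vlD m D σ ∘ₗ (Sec Fq m b k).subtype)).map
      (Sec Fq m b k).subtype := by
  ext f
  constructor
  · rintro ⟨hf, hv⟩
    exact ⟨⟨f, hf⟩, by
      rw [SetLike.mem_coe, LinearMap.mem_ker]
      funext P
      exact hv P.1 P.2, rfl⟩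
  · rintro ⟨g, hg, rfl⟩
    refine ⟨g.2, fun P hP => ?_⟩
    exact congrFun (LinearMap.mem_ker.1 hg) ⟨P, hP⟩

theorem finrank_VS (m : ℕ) (b : ℤ) (k : ℕ) (D : Finset (P1Pt Fq))
    (σ : (P : P1Pt Fq) → Option P.Res) :
    Module.finrank Fq (LinearMap.range (vlD m D σ ∘ₗ (Sec Fq m b k).subtype)) +
      Module.finrank Fq (VS m b k D σ) = Module.finrank Fq (Sec Fq m b k) := by
  rw [VS_eq, ← (Submodule.equivMapOfInjective _ (Submodule.injective_subtype _) _).finrank_eq]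
  exact LinearMap.finrank_range_add_finrank_ker _

theorem finrank_VS_ge (m : ℕ) (b : ℤ) (k : ℕ) (D : Finset (P1Pt Fq))
    (σ : (P : P1Pt Fq) → Option P.Res) :
    Module.finrank Fq (Sec Fq m b k) ≤ Module.finrank Fq (VS m b k D σ) + degD D := by
  have h1 := finrank_VS m b k D σ
  have h2 := Submodule.finrank_le (LinearMap.range (vlD m D σ ∘ₗ (Sec Fq m b k).subtype))
  rw [finrank_pi_res] at h2
  omega

/-- primitive linear forms -/
def Prim (C : Fin 2 → RR Fq) : Prop := ∀ P : P1Pt Fq, ¬ (ev P (C 0) = 0 ∧ ev P (C 1) = 0)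

theorem Sec1_nonneg {a : ℤ} {k : ℕ} {E : Fin 2 → RR Fq} (hE : E ∈ Sec Fq 1 a k) (h0 : E ≠ 0) :
    0 ≤ a := by
  rw [mem_Sec1] at hE
  by_contra h
  apply h0
  funext i
  fin_cases i
  · exact eq_zero_of_neg (by omega) hE.1
  · exact eq_zero_of_neg (by omega) hE.2

theorem prim_part (k : ℕ) : ∀ (n : ℕ) (E : Fin 2 → RR Fq), E ∈ Sec Fq 1 n k → E ≠ 0 →
    ∃ (m : ℕ) (C : Fin 2 → RR Fq) (g : RR Fq), C ∈ Sec Fq 1 m k ∧ Prim C ∧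
      g ∈ H Fq ((n : ℤ) - m) ∧ g ≠ 0 ∧ ∀ i, E i = g * C i := by
  intro n
  induction n using Nat.strong_induction_on with
  | _ n ih =>
    intro E hE h0
    by_cases hp : Prim E
    · refine ⟨n, E, 1, hE, hp, ?_, one_ne_zero, fun i => (one_mul _).symm⟩
      rw [sub_self]
      exact mem_H_nat.2 (MvPolynomial.isHomogeneous_one _ _)
    · rw [Prim] at hp
      push Not at hp
      obtain ⟨P, h1, h2⟩ := hp
      rw [mem_Sec1] at hE
      obtain ⟨E0, hE0, e0⟩ := ev_dvdZ P hE.1 h1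
      obtain ⟨E1, hE1, e1⟩ := ev_dvdZ P hE.2 h2
      have hE' : ![E0, E1] ∈ Sec Fq 1 ((n : ℤ) - P.deg) k := by
        rw [mem_Sec1]
        refine ⟨hE0, ?_⟩
        have : (n : ℤ) - P.deg - k = n - k - P.deg := by ring
        rw [this]; exact hE1
      have hne : ![E0, E1] ≠ 0 := by
        intro h
        apply h0
        have a0 : E0 = 0 := congrFun h 0
        have a1 : E1 = 0 := congrFun h 1
        funext i
        fin_cases i
        · simp [e0, a0]
        · simp [e1, a1]
      have hnn := Sec1_nonneg hE' hne
      have hdp := deg_pos P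
      have hcast : (n : ℤ) - P.deg = ((n - P.deg : ℕ) : ℤ) := by omega
      rw [hcast] at hE'
      obtain ⟨m, C, g, hC, hCp, hg, hg0, hEg⟩ := ih (n - P.deg) (by omega) _ hE' hne
      refine ⟨m, C, pip P * g, hC, hCp, mul_mem_H' (pip_mem P) hg (by omega),
        mul_ne_zero (pip_ne P) hg0, ?_⟩
      intro i
      have := hEg i
      fin_cases i
      · simp at this; simp [e0, this, mul_assoc]
      · simp at this; simp [e1, this, mul_assoc]

theorem coprime_div : ∀ (a : ℕ) (C U A T : RR Fq) (n : ℤ), C ∈ H Fq (a : ℤ) → C ≠ 0 →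
    (∀ P, ev P C = 0 → ev P U ≠ 0) → A ∈ H Fq n → A * U = C * T →
    ∃ B ∈ H Fq (n - a), A = B * C := by
  intro a
  induction a using Nat.strong_induction_on with
  | _ a ih =>
    intro C U A T n hC hC0 hcop hA hAU
    rcases Nat.eq_zero_or_pos a with rfl | ha
    · obtain ⟨c, rfl⟩ := const_of_H0 (by simpa using hC)
      have hc : c ≠ 0 := by rintro rfl; simp at hC0
      refine ⟨c⁻¹ • A, ?_, ?_⟩
      · simpa using Submodule.smul_mem _ _ hA
      · rw [mul_comm, MvPolynomial.C_mul', smul_smul, mul_inv_cancel₀ hc, one_smul]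
    · obtain ⟨P, hP⟩ := exists_zeroZ hC (by omega)
      obtain ⟨C', hC', rfl⟩ := ev_dvdZ P hC hP
      have hC0' : C' ≠ 0 := right_ne_zero_of_mul hC0
      have hU := hcop P hP
      have hev : ev P A = 0 := by
        have := congrArg (ev P) hAU
        rw [map_mul, map_mul, hP, zero_mul] at this
        exact (mul_eq_zero.1 this).resolve_right hU
      obtain ⟨A', hA', rfl⟩ := ev_dvdZ P hA hev
      have hnn := nonneg_of_ne hC' hC0'
      have hdp := deg_pos P
      have hcast : (a : ℤ) - P.deg = ((a - P.deg : ℕ) : ℤ) := by omega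
      rw [hcast] at hC'
      obtain ⟨B, hB, hAB⟩ := ih (a - P.deg) (by omega) C' U A' T _ hC' hC0'
        (fun Q hQ => hcop Q (by rw [map_mul, hQ, mul_zero])) hA'
        (mul_left_cancel₀ (pip_ne P) (by rw [← mul_assoc, hAU, mul_assoc]))
      refine ⟨B, ?_, by rw [hAB]; ring⟩
      have : n - P.deg - ((a - P.deg : ℕ) : ℤ) = n - a := by omega
      rw [← this]; exact hB

/-- product of a quadratic and a linear form -/
def mulBC (C : Fin 2 → RR Fq) : (Fin 3 → RR Fq) →ₗ[Fq] (Fin 4 → RR Fq) where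
  toFun B := ![B 0 * C 0, B 0 * C 1 + B 1 * C 0, B 1 * C 1 + B 2 * C 0, B 2 * C 1]
  map_add' B B' := by
    funext i; fin_cases i <;> simp <;> ring
  map_smul' c B := by
    funext i; fin_cases i <;> simp

/-- restriction of a cubic to the curve C = 0 -/
def rho (C : Fin 2 → RR Fq) : (Fin 4 → RR Fq) →ₗ[Fq] RR Fq where
  toFun A := - A 0 * C 1 ^ 3 + A 1 * C 1 ^ 2 * C 0 - A 2 * C 1 * C 0 ^ 2 + A 3 * C 0 ^ 3
  map_add' B B' := by simp; ring
  map_smul' c B := by simp [smul_sub, smul_add]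

theorem rho_apply (C : Fin 2 → RR Fq) (A : Fin 4 → RR Fq) : rho C A =
    - A 0 * C 1 ^ 3 + A 1 * C 1 ^ 2 * C 0 - A 2 * C 1 * C 0 ^ 2 + A 3 * C 0 ^ 3 := rfl

theorem ker_rho {k m : ℕ} {ℓ : ℤ} {C : Fin 2 → RR Fq} (hC : C ∈ Sec Fq 1 m k) (hp : Prim C)
    {A : Fin 4 → RR Fq} (hA : A ∈ Sec Fq 3 ℓ k) (h : rho C A = 0) :
    ∃ B ∈ Sec Fq 2 (ℓ - m) k, A = mulBC C B := by
  rw [mem_Sec1] at hC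
  rw [mem_Sec3] at hA
  rw [rho_apply] at h
  obtain ⟨h0, h1, h2, h3⟩ := hA
  obtain ⟨hC0, hC1⟩ := hC
  by_cases hz : C 0 = 0
  · have hC1z : C 1 ≠ 0 := by
      intro h
      exact hp none ⟨by rw [hz, map_zero], by rw [h, map_zero]⟩
    have hd : (m : ℤ) - k = 0 := by
      have hn := nonneg_of_ne hC1 hC1z
      by_contra hne
      obtain ⟨P, hP⟩ := exists_zeroZ hC1 (by omega)
      exact hp P ⟨by rw [hz, map_zero], hP⟩
    have hmk : (m : ℤ) = k := by omega
    rw [hd] at hC1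
    obtain ⟨c, hc⟩ := const_of_H0 hC1
    have hc0 : c ≠ 0 := by rintro rfl; simp at hc; exact hC1z hc
    have hA0 : A 0 = 0 := by
      rw [hz] at h
      have : A 0 * C 1 ^ 3 = 0 := by linear_combination -h
      exact (mul_eq_zero.1 this).resolve_right (pow_ne_zero _ hC1z)
    refine ⟨![c⁻¹ • A 1, c⁻¹ • A 2, c⁻¹ • A 3], ?_, ?_⟩
    · rw [mem_Sec2, hmk]
      refine ⟨Submodule.smul_mem _ _ h1, Submodule.smul_mem _ _ ?_, Submodule.smul_mem _ _ ?_⟩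
      · convert h2 using 2; ring
      · convert h3 using 2; ring
    · have key : ∀ x : RR Fq, (c⁻¹ • x) * C 1 = x := by
        intro x
        rw [hc, mul_comm, MvPolynomial.C_mul', smul_smul, mul_inv_cancel₀ hc0, one_smul]
      funext i
      have k1 := key (A 1)
      have k2 := key (A 2)
      have k3 := key (A 3)
      fin_cases i
      · simp [mulBC, hA0, hz]
      · simp only [mulBC, hz]; simpa using k1.symm
      · simp only [mulBC, hz]; simpa using k2.symm
      · simp only [mulBC]; simpa using k3.symm
  · have hcop : ∀ n : ℕ, ∀ P, ev P (C 0) = 0 → ev P (C 1 ^ n) ≠ 0 := by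
      intro n P hP h
      rw [map_pow] at h
      exact hp P ⟨hP, eq_zero_of_pow_eq_zero h⟩
    obtain ⟨B0, hB0, e0⟩ := coprime_div m (C 0) (C 1 ^ 3) (A 0)
      (A 1 * C 1 ^ 2 - A 2 * C 1 * C 0 + A 3 * C 0 ^ 2) ℓ hC0 hz (hcop 3) h0
      (by linear_combination -h)
    have h' : (A 1 - B0 * C 1) * C 1 ^ 2 - A 2 * C 1 * C 0 + A 3 * C 0 ^ 2 = 0 := by
      apply mul_left_cancel₀ hz
      rw [e0] at h
      linear_combination h
    obtain ⟨B1, hB1, e1⟩ := coprime_div m (C 0) (C 1 ^ 2) (A 1 - B0 * C 1)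
      (A 2 * C 1 - A 3 * C 0) (ℓ - k) hC0 hz (hcop 2)
      (Submodule.sub_mem _ h1 (mul_mem_H' hB0 hC1 (by ring)))
      (by linear_combination h')
    have h'' : (A 2 - B1 * C 1) * C 1 - A 3 * C 0 = 0 := by
      apply mul_left_cancel₀ hz
      rw [e1] at h'
      linear_combination -h'
    obtain ⟨B2, hB2, e2⟩ := coprime_div m (C 0) (C 1 ^ 1) (A 2 - B1 * C 1)
      (A 3) (ℓ - 2 * k) hC0 hz (hcop 1)
      (Submodule.sub_mem _ h2 (mul_mem_H' hB1 hC1 (by ring)))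
      (by linear_combination h'')
    have h3' : A 3 = B2 * C 1 := by
      apply mul_left_cancel₀ hz
      rw [e2] at h''
      linear_combination -h''
    refine ⟨![B0, B1, B2], ?_, ?_⟩
    · rw [mem_Sec2]
      refine ⟨hB0, ?_, ?_⟩
      · change B1 ∈ _; convert hB1 using 2; ring
      · change B2 ∈ _; convert hB2 using 2; ring
    · funext i
      fin_cases i
      · simp [mulBC, e0]
      · simp only [mulBC]
        have : A 1 = B0 * C 1 + B1 * C 0 := by linear_combination e1
        simpa using this
      · simp only [mulBC]
        have : A 2 = B1 * C 1 + B2 * C 0 := by linear_combination e2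
        simpa using this
      · simp only [mulBC]; simpa using h3'


theorem finrank_VS2 {b : ℤ} {k : ℕ} {G : Finset (P1Pt Fq)}
    (σ : (P : P1Pt Fq) → Option P.Res) (h : (degD G : ℤ) ≤ b - 2 * k + 1) :
    degD G + Module.finrank Fq (VS 2 b k G σ) = Module.finrank Fq (Sec Fq 2 b k) := by
  rw [← finrank_VS 2 b k G σ]
  congr 1
  have : LinearMap.range (vlD 2 G σ ∘ₗ (Sec Fq 2 b k).subtype) = ⊤ := by
    rw [LinearMap.range_eq_top]
    intro τ
    obtain ⟨f0, hf0, e0⟩ := exists_interp (n := b) (D := G) (by omega)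
      (fun P => if σ P.1 = none then τ P else 0)
    obtain ⟨f2, hf2, e2⟩ := exists_interp (n := b - 2 * k) (D := G) (by omega)
      (fun P => if σ P.1 = none then 0 else τ P)
    refine ⟨⟨![f0, 0, f2], ?_⟩, ?_⟩
    · rw [mem_Sec2]
      exact ⟨hf0, Submodule.zero_mem _, hf2⟩
    · funext P
      change vl 2 P.1 (σ P.1) ![f0, 0, f2] = τ P
      rw [vl2]
      have e0 := e0 P
      have e2 := e2 P
      simp only [Matrix.cons_val_zero, Matrix.cons_val_one, Matrix.cons_val, map_zero, zero_mul,
        add_zero]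
      rw [e0, e2]
      rcases hσ : σ P.1 with _ | z
      · simp [px, py]
      · simp [py]
  rw [this, finrank_top, finrank_pi_res]

theorem rho_mem {k m : ℕ} {ℓ : ℤ} {C : Fin 2 → RR Fq} (hC : C ∈ Sec Fq 1 m k)
    {A : Fin 4 → RR Fq} (hA : A ∈ Sec Fq 3 ℓ k) : rho C A ∈ H Fq (ℓ + 3 * m - 3 * k) := by
  rw [mem_Sec1] at hC
  rw [mem_Sec3] at hA
  obtain ⟨h0, h1, h2, h3⟩ := hA
  obtain ⟨c0, c1⟩ := hC
  rw [rho_apply]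
  have e : - A 0 * C 1 ^ 3 + A 1 * C 1 ^ 2 * C 0 - A 2 * C 1 * C 0 ^ 2 + A 3 * C 0 ^ 3
    = - (A 0 * (C 1 * (C 1 * C 1))) + A 1 * (C 1 * (C 1 * C 0)) - A 2 * (C 1 * (C 0 * C 0))
      + A 3 * (C 0 * (C 0 * C 0)) := by ring
  rw [e]
  refine Submodule.add_mem _ (Submodule.sub_mem _ (Submodule.add_mem _ (Submodule.neg_mem _ ?_) ?_) ?_) ?_
  · exact mul_mem_H' h0 (mul_mem_H c1 (mul_mem_H c1 c1)) (by ring)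
  · exact mul_mem_H' h1 (mul_mem_H c1 (mul_mem_H c1 c0)) (by ring)
  · exact mul_mem_H' h2 (mul_mem_H c1 (mul_mem_H c0 c0)) (by ring)
  · exact mul_mem_H' h3 (mul_mem_H c0 (mul_mem_H c0 c0)) (by ring)

theorem rho_vanish {C : Fin 2 → RR Fq} {A : Fin 4 → RR Fq} {P : P1Pt Fq} {z : Option P.Res}
    (h1 : vl 1 P z C = 0) (h3 : vl 3 P z A = 0) : ev P (rho C A) = 0 := by
  rw [vl1] at h1
  rw [vl3] at h3
  rw [rho_apply]
  simp only [map_add, map_sub, map_mul, map_neg, map_pow]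
  rcases z with _ | z
  · simp only [px, py] at h1 h3
    simp at h1 h3
    rw [h1, h3]; ring
  · simp only [px, py] at h1 h3
    have : ev P (C 1) = - ev P (C 0) * z := by linear_combination h1
    rw [this]
    linear_combination (ev P (C 0)) ^ 3 * h3

theorem vl_mulBC (P : P1Pt Fq) (z : Option P.Res) (C : Fin 2 → RR Fq) (B : Fin 3 → RR Fq) :
    vl 3 P z (mulBC C B) = vl 2 P z B * vl 1 P z C := by
  rw [vl1, vl2, vl3]
  simp only [mulBC, LinearMap.coe_mk, AddHom.coe_mk, Matrix.cons_val_zero, Matrix.cons_val_one,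
    Matrix.cons_val, map_add, map_mul]
  ring

theorem finrank_VS3_le {k m : ℕ} {ℓ : ℤ} {C : Fin 2 → RR Fq} (hC : C ∈ Sec Fq 1 m k) (hp : Prim C)
    (D : Finset (P1Pt Fq)) (σ : (P : P1Pt Fq) → Option P.Res) :
    Module.finrank Fq (VS 3 ℓ k D σ) ≤
      (ℓ + 3 * m - 3 * k + 1 - degD (D.filter (fun P => vl 1 P (σ P) C = 0))).toNat
      + Module.finrank Fq (VS 2 (ℓ - m) k (D.filter (fun P => vl 1 P (σ P) C ≠ 0)) σ) := by
  rw [← finrank_KK]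
  rw [← LinearMap.finrank_range_add_finrank_ker (rho C ∘ₗ (VS 3 ℓ k D σ).subtype)]
  have hfin : Module.Finite Fq
      (KK (ℓ + 3 * m - 3 * k) (D.filter (fun P => vl 1 P (σ P) C = 0))) :=
    Submodule.finiteDimensional_of_le (S₂ := H Fq (ℓ + 3 * m - 3 * k)) (fun f hf => hf.1)
  refine add_le_add ?_ ?_
  · apply Submodule.finrank_mono
    rintro _ ⟨s, rfl⟩
    refine ⟨rho_mem hC s.2.1, fun P hP => ?_⟩
    rw [Finset.mem_filter] at hP
    exact rho_vanish hP.2 (s.2.2 P hP.1)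
  · rw [(Submodule.equivMapOfInjective _ (Submodule.injective_subtype (VS 3 ℓ k D σ)) _).finrank_eq]
    refine le_trans (Submodule.finrank_mono ?_) (Submodule.finrank_map_le (mulBC C) _)
    rintro _ ⟨s, hs, rfl⟩
    obtain ⟨B, hB, e⟩ := ker_rho hC hp s.2.1 (LinearMap.mem_ker.1 hs)
    refine ⟨B, ⟨hB, fun P hP => ?_⟩, e.symm⟩
    rw [Finset.mem_filter] at hP
    have := s.2.2 P hP.1
    rw [e, vl_mulBC] at this
    exact (mul_eq_zero.1 this).resolve_right hP.2

theorem degD_split (D : Finset (P1Pt Fq)) (p : P1Pt Fq → Prop) :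
    degD (D.filter p) + degD (D.filter (fun P => ¬ p P)) = degD D :=
  Finset.sum_filter_add_sum_filter_not D p _

theorem exists_linear {m k : ℕ} (D : Finset (P1Pt Fq)) (σ : (P : P1Pt Fq) → Option P.Res)
    (h : degD D + k ≤ 2 * m + 1) : ∃ E ∈ Sec Fq 1 m k, E ≠ 0 ∧ ∀ P ∈ D, vl 1 P (σ P) E = 0 := by
  have h1 := finrank_VS_ge 1 m k D σ
  rw [finrank_Sec1] at h1
  have h2 : 0 < Module.finrank Fq (VS 1 m k D σ) := by omega
  rw [Module.finrank_pos_iff_exists_ne_zero] at h2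
  obtain ⟨⟨E, hE⟩, h0⟩ := h2
  exact ⟨E, hE.1, fun h => h0 (Subtype.ext h), hE.2⟩

theorem dim_VS {ℓ k : ℕ} (D : Finset (P1Pt Fq)) (h3 : 3 * k ≤ ℓ) (hD : degD D + 5 * k ≤ 2 * ℓ)
    (σ : (P : P1Pt Fq) → Option P.Res) :
    Module.finrank Fq (VS 3 ℓ k D σ) = 4 * ℓ + 4 - 6 * k - degD D ∨
    ∃ m : ℕ, m + 2 * k ≤ ℓ ∧ ∃ C ∈ Sec Fq 1 m k, Prim C ∧
      Module.finrank Fq (VS 3 ℓ k D σ) + degD (D.filter (fun P => vl 1 P (σ P) C ≠ 0)) ≤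
        3 * (ℓ - m - k + 1) := by
  obtain ⟨E, hE, hE0, hEv⟩ := exists_linear (m := (degD D + k) / 2) (k := k) D σ (by omega)
  obtain ⟨m, C, g, hC, hp, hg, hg0, hEg⟩ := prim_part k _ E hE hE0
  have hdeg : (degD (D.filter (fun P => vl 1 P (σ P) C ≠ 0)) : ℤ) ≤ ((degD D + k) / 2 : ℕ) - m := by
    apply deg_le_of_vanish hg hg0
    intro P hP
    rw [Finset.mem_filter] at hP
    have h1 := hEv P hP.1
    have h2 : vl 1 P (σ P) E = ev P g * vl 1 P (σ P) C := by
      rw [vl1, vl1, hEg, hEg, map_mul, map_mul]; ring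
    rw [h2] at h1
    exact (mul_eq_zero.1 h1).resolve_right hP.2
  have hle := finrank_VS3_le (ℓ := ℓ) hC hp D σ
  have hge := finrank_VS_ge 3 ℓ k D σ
  have hsp := degD_split D (fun P => vl 1 P (σ P) C = 0)
  have h2 := finrank_VS2 (b := (ℓ : ℤ) - m) (k := k)
    (G := D.filter (fun P => vl 1 P (σ P) C ≠ 0)) σ (by omega)
  rw [finrank_Sec2] at h2
  rw [finrank_Sec3] at hge
  simp only [ne_eq] at *
  by_cases hN : (degD (D.filter (fun P => vl 1 P (σ P) C = 0)) : ℤ) ≤ ℓ + 3 * m - 3 * k + 1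
  · left
    omega
  · right
    refine ⟨m, by omega, C, hC, hp, ?_⟩
    omega

section Fin
variable [Fintype Fq]


instance resFinite (P : P1Pt Fq) : Finite P.Res := Module.finite_of_finite Fq
instance resFintype (P : P1Pt Fq) : Fintype P.Res := Fintype.ofFinite _

/-- the size of the field, as a real -/
def qq (Fq : Type) [Fintype Fq] : ℝ := (Fintype.card Fq : ℝ)

theorem qq_ge : (2 : ℝ) ≤ qq Fq := by
  have : 2 ≤ Fintype.card Fq := Fintype.one_lt_card
  unfold qq
  exact_mod_cast this

theorem qq_pos : (0 : ℝ) < qq Fq := by have := qq_ge (Fq := Fq); linarith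

theorem qq_one : (1 : ℝ) ≤ qq Fq := by have := qq_ge (Fq := Fq); linarith

theorem card_res (P : P1Pt Fq) : (Fintype.card P.Res : ℝ) = qq Fq ^ P.deg := by
  have := Module.natCard_eq_pow_finrank (K := Fq) (V := P.Res)
  rw [resFinrank, Nat.card_eq_fintype_card, Nat.card_eq_fintype_card] at this
  rw [this]; simp [qq]

/-- the finset of elements of a finite-dimensional subspace -/
def fs {n : ℕ} (S : Submodule Fq (Fin n → RR Fq)) [Module.Finite Fq S] :
    Finset (Fin n → RR Fq) :=
  have : Finite S := Module.finite_of_finite Fq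
  (Set.toFinite (S : Set (Fin n → RR Fq))).toFinset

theorem mem_fs {n : ℕ} {S : Submodule Fq (Fin n → RR Fq)} [Module.Finite Fq S]
    {s : Fin n → RR Fq} : s ∈ fs S ↔ s ∈ S := by
  simp [fs]

theorem card_fs {n : ℕ} (S : Submodule Fq (Fin n → RR Fq)) [Module.Finite Fq S] :
    ((fs S).card : ℝ) = qq Fq ^ Module.finrank Fq S := by
  have := Module.natCard_eq_pow_finrank (K := Fq) (V := S)
  rw [Nat.card_eq_fintype_card (α := Fq)] at this
  have h2 : (fs S).card = Nat.card S := by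
    have : ((fs S : Finset _) : Set (Fin n → RR Fq)) = (S : Set _) := by
      ext s; simp [mem_fs]
    rw [← Set.ncard_coe_finset, this]
    rfl
  rw [h2, this]; simp [qq]

theorem rP_eq (P : P1Pt Fq) (s : Fin 4 → RR Fq) :
    (rP P s : ℝ) = ∑ z : Option P.Res, if vl 3 P z s = 0 then (1 : ℝ) else 0 := by
  rw [Fintype.sum_option, rP]
  simp only [resEval_eq, vl3, px, py]
  push_cast
  rw [add_comm]
  congr 1
  · simp
    split_ifs <;> simp [*]
  · rw [Nat.card_eq_fintype_card, Fintype.card_subtype, Finset.sum_boole]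
    congr 2
    ext z
    simp

/-- extension of a section by junk -/
def ext' (D : Finset (P1Pt Fq)) (σ : (P : ↥D) → Option (P1Pt.Res P.1)) :
    (P : P1Pt Fq) → Option P.Res :=
  fun P => if h : P ∈ D then σ ⟨P, h⟩ else none

theorem ext'_apply (D : Finset (P1Pt Fq)) (σ : (P : ↥D) → Option (P1Pt.Res P.1)) (P : ↥D) :
    ext' D σ P.1 = σ P := by
  simp [ext', P.2]

theorem sum_rD (ℓ k : ℕ) (D : Finset (P1Pt Fq)) :
    ∑ s ∈ fs (Sec Fq 3 ℓ k), ∏ P ∈ D, (rP P s : ℝ) =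
    ∑ σ : (P : ↥D) → Option (P1Pt.Res P.1),
      qq Fq ^ Module.finrank Fq (VS 3 ℓ k D (ext' D σ)) := by
  have h1 : ∀ s : Fin 4 → RR Fq, ∏ P ∈ D, (rP P s : ℝ) =
      ∑ σ : (P : ↥D) → Option (P1Pt.Res P.1),
        if (∀ P : ↥D, vl 3 P.1 (σ P) s = 0) then (1 : ℝ) else 0 := by
    intro s
    rw [← Finset.prod_coe_sort]
    simp only [rP_eq]
    rw [Finset.prod_univ_sum, Fintype.piFinset_univ]
    refine Finset.sum_congr rfl fun σ _ => ?_
    rw [Finset.prod_ite_zero]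
    simp
  simp only [h1]
  rw [Finset.sum_comm]
  refine Finset.sum_congr rfl fun σ _ => ?_
  rw [← card_fs, Finset.sum_boole]
  congr 2
  ext s
  rw [Finset.mem_filter, mem_fs, mem_fs, mem_VS]
  refine and_congr Iff.rfl ⟨fun h P hP => ?_, fun h P => ?_⟩
  · have := h ⟨P, hP⟩
    rw [← ext'_apply D σ ⟨P, hP⟩] at this
    exact this
  · rw [← ext'_apply D σ P]
    exact h P.1 P.2

/-- the weight attached to a linear form -/
def wt (C : Fin 2 → RR Fq) (P : P1Pt Fq) (z : Option P.Res) : ℝ :=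
  if vl 1 P z C = 0 then 1 else (qq Fq ^ P.deg)⁻¹

theorem wt_pos (C : Fin 2 → RR Fq) (P : P1Pt Fq) (z : Option P.Res) : 0 < wt C P z := by
  have := qq_pos (Fq := Fq)
  unfold wt
  split_ifs <;> positivity

theorem sum_wt {C : Fin 2 → RR Fq} (hp : Prim C) (P : P1Pt Fq) :
    ∑ z : Option P.Res, wt C P z ≤ 2 := by
  have hq : (0 : ℝ) < qq Fq ^ P.deg := pow_pos qq_pos _
  have hcard : (Finset.univ.filter (fun z : Option P.Res => vl 1 P z C = 0)).card ≤ 1 := by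
    rw [Finset.card_le_one]
    intro a ha b hb
    rw [Finset.mem_filter] at ha hb
    have ha := ha.2
    have hb := hb.2
    rw [vl1] at ha hb
    rcases a with _ | a <;> rcases b with _ | b
    · rfl
    · simp only [px, py] at ha hb
      simp at ha
      rw [ha] at hb
      simp at hb
      exact absurd ⟨ha, hb⟩ (hp P)
    · simp only [px, py] at ha hb
      simp at hb
      rw [hb] at ha
      simp at ha
      exact absurd ⟨hb, ha⟩ (hp P)
    · simp only [px, py] at ha hb
      by_cases h0 : ev P (C 0) = 0
      · rw [h0] at ha
        simp at ha
        exact absurd ⟨h0, ha⟩ (hp P)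
      · congr 1
        apply mul_left_cancel₀ h0
        linear_combination ha - hb
  have hcard' : ((Finset.univ.filter (fun z : Option P.Res => vl 1 P z C = 0)).card : ℝ) ≤ 1 := by
    exact_mod_cast hcard
  have htot : ((Finset.univ : Finset (Option P.Res)).card : ℝ) = qq Fq ^ P.deg + 1 := by
    rw [Finset.card_univ, Fintype.card_option]; push_cast; rw [card_res]
  have hadd := Finset.card_filter_add_card_filter_not (s := (Finset.univ : Finset (Option P.Res)))
    (fun z : Option P.Res => vl 1 P z C = 0)
  have hadd' : ((Finset.univ.filter (fun z : Option P.Res => vl 1 P z C = 0)).card : ℝ) +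
    ((Finset.univ.filter (fun z : Option P.Res => ¬ vl 1 P z C = 0)).card : ℝ) =
      qq Fq ^ P.deg + 1 := by
    rw [← htot, ← hadd]; push_cast; rfl
  unfold wt
  rw [Finset.sum_ite, Finset.sum_const, Finset.sum_const, nsmul_eq_mul, nsmul_eq_mul, mul_one]
  set x := ((Finset.univ.filter (fun z : Option P.Res => vl 1 P z C = 0)).card : ℝ)
  set y := ((Finset.univ.filter (fun z : Option P.Res => ¬ vl 1 P z C = 0)).card : ℝ)
  have hy : y = qq Fq ^ P.deg + 1 - x := by linarith
  rw [hy, ← div_eq_mul_inv]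
  have h1 : (1 : ℝ) ≤ qq Fq ^ P.deg := one_le_pow₀ qq_one
  have : (qq Fq ^ P.deg + 1 - x) / qq Fq ^ P.deg ≤ 2 - x := by
    rw [div_le_iff₀ hq]
    nlinarith
  linarith

theorem sum_prod_wt {C : Fin 2 → RR Fq} (hp : Prim C) (D : Finset (P1Pt Fq)) :
    ∑ σ : (P : ↥D) → Option (P1Pt.Res P.1), ∏ P : ↥D, wt C P.1 (σ P) ≤ 2 ^ D.card := by
  have := Finset.prod_univ_sum (fun P : ↥D => (Finset.univ : Finset (Option (P1Pt.Res P.1))))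
    (fun P z => wt C P.1 z)
  rw [Fintype.piFinset_univ] at this
  rw [← this]
  refine (Finset.prod_le_prod (fun P _ => Finset.sum_nonneg fun z _ => (wt_pos C P.1 z).le)
    (fun P _ => sum_wt hp P.1)).trans ?_
  simp

theorem pow_degD (D : Finset (P1Pt Fq)) : ∏ P ∈ D, qq Fq ^ P.deg = qq Fq ^ degD D := by
  rw [degD, Finset.prod_pow_eq_pow_sum]

theorem prod_wt (C : Fin 2 → RR Fq) (D : Finset (P1Pt Fq))
    (σ : (P : P1Pt Fq) → Option P.Res) : ∏ P ∈ D, wt C P (σ P) =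
      (qq Fq ^ degD (D.filter (fun P => vl 1 P (σ P) C ≠ 0)))⁻¹ := by
  unfold wt
  rw [Finset.prod_ite, Finset.prod_const_one, one_mul, Finset.prod_inv_distrib, pow_degD]

/-- primitive forms of degree m -/
def PC (Fq : Type) [Field Fq] [Fintype Fq] (m k : ℕ) : Finset (Fin 2 → RR Fq) :=
  (fs (Sec Fq 1 m k)).filter Prim

theorem err_sigma {ℓ k : ℕ} (D : Finset (P1Pt Fq)) (h3 : 3 * k ≤ ℓ) (hD : degD D + 5 * k ≤ 2 * ℓ)
    (σ : (P : ↥D) → Option (P1Pt.Res P.1)) :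
    |qq Fq ^ Module.finrank Fq (VS 3 ℓ k D (ext' D σ)) - qq Fq ^ (4 * ℓ + 4 - 6 * k - degD D)| ≤
    ∑ m ∈ Finset.range (ℓ - 2 * k + 1), ∑ C ∈ PC Fq m k,
      qq Fq ^ (3 * (ℓ - m - k + 1)) * ∏ P : ↥D, wt C P.1 (σ P) := by
  have hq := qq_pos (Fq := Fq)
  have hnn : ∀ (m : ℕ) (C : Fin 2 → RR Fq),
      0 ≤ qq Fq ^ (3 * (ℓ - m - k + 1)) * ∏ P : ↥D, wt C P.1 (σ P) := fun m C =>
    mul_nonneg (pow_pos hq _).le (Finset.prod_nonneg fun P _ => (wt_pos C P.1 _).le)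
  rcases dim_VS D h3 hD (ext' D σ) with h | ⟨m, hm, C, hC, hp, h⟩
  · rw [h, sub_self, abs_zero]
    exact Finset.sum_nonneg fun m _ => Finset.sum_nonneg fun C _ => hnn m C
  · have hge := finrank_VS_ge 3 ℓ k D (ext' D σ)
    rw [finrank_Sec3] at hge
    have h1 : qq Fq ^ (4 * ℓ + 4 - 6 * k - degD D) ≤
        qq Fq ^ Module.finrank Fq (VS 3 ℓ k D (ext' D σ)) :=
      pow_le_pow_right₀ qq_one (by omega)
    rw [abs_of_nonneg (by linarith)]
    have h2 : qq Fq ^ Module.finrank Fq (VS 3 ℓ k D (ext' D σ)) ≤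
        qq Fq ^ (3 * (ℓ - m - k + 1)) * ∏ P : ↥D, wt C P.1 (σ P) := by
      have e : ∏ P : ↥D, wt C P.1 (σ P) = ∏ P ∈ D, wt C P (ext' D σ P) :=
        (Finset.prod_congr rfl fun P _ => by rw [ext'_apply]).trans
          (Finset.prod_coe_sort D (fun P => wt C P (ext' D σ P)))
      rw [e, prod_wt, ← div_eq_mul_inv, le_div_iff₀ (pow_pos hq _), ← pow_add]
      exact pow_le_pow_right₀ qq_one h
    have h3 : qq Fq ^ (3 * (ℓ - m - k + 1)) * ∏ P : ↥D, wt C P.1 (σ P) ≤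
        ∑ C ∈ PC Fq m k, qq Fq ^ (3 * (ℓ - m - k + 1)) * ∏ P : ↥D, wt C P.1 (σ P) :=
      Finset.single_le_sum
        (f := fun C => qq Fq ^ (3 * (ℓ - m - k + 1)) * ∏ P : ↥D, wt C P.1 (σ P))
        (fun C _ => hnn m C) (by rw [PC, Finset.mem_filter, mem_fs]; exact ⟨hC, hp⟩)
    have h4 : ∑ C ∈ PC Fq m k, qq Fq ^ (3 * (ℓ - m - k + 1)) * ∏ P : ↥D, wt C P.1 (σ P) ≤ _ :=
      Finset.single_le_sum (s := Finset.range (ℓ - 2 * k + 1))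
        (f := fun m => ∑ C ∈ PC Fq m k,
          qq Fq ^ (3 * (ℓ - m - k + 1)) * ∏ P : ↥D, wt C P.1 (σ P))
        (fun m _ => Finset.sum_nonneg fun C _ => hnn m C) (Finset.mem_range.2 (by omega))
    have h5 := pow_pos hq (4 * ℓ + 4 - 6 * k - degD D)
    linarith

theorem card_PC {ℓ k m : ℕ} (hm : m + 2 * k ≤ ℓ) :
    ((PC Fq m k).card : ℝ) * qq Fq ^ (3 * (ℓ - m - k + 1)) ≤
      qq Fq ^ (3 * ℓ - 3 * k + 5) * (1 / 2) ^ m := by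
  have hq := qq_pos (Fq := Fq)
  have hcard : ((PC Fq m k).card : ℝ) ≤ qq Fq ^ ((m + 1) + ((m : ℤ) - k + 1).toNat) := by
    have h1 := card_fs (Sec Fq 1 m k)
    rw [finrank_Sec1] at h1
    have h2 : ((PC Fq m k).card : ℝ) ≤ ((fs (Sec Fq 1 m k)).card : ℝ) := by
      exact_mod_cast Finset.card_filter_le _ _
    rw [h1] at h2
    convert h2 using 2
    omega
  have key : ∀ a : ℕ, a + m ≤ 3 * ℓ - 3 * k + 5 →
      qq Fq ^ a ≤ qq Fq ^ (3 * ℓ - 3 * k + 5) * (1 / 2) ^ m := by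
    intro a ha
    have e : (3 * ℓ - 3 * k + 5) = (3 * ℓ - 3 * k + 5 - m) + m := by omega
    rw [e, pow_add, mul_assoc, ← mul_pow]
    have h1 : (1 : ℝ) ≤ (qq Fq * (1 / 2)) ^ m :=
      one_le_pow₀ (by have := qq_ge (Fq := Fq); linarith)
    have h2 : qq Fq ^ a ≤ qq Fq ^ (3 * ℓ - 3 * k + 5 - m) :=
      pow_le_pow_right₀ qq_one (by omega)
    have h3 := pow_pos hq (3 * ℓ - 3 * k + 5 - m)
    nlinarith
  have hc2 := mul_le_mul_of_nonneg_right hcard (pow_pos hq (3 * (ℓ - m - k + 1))).le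
  rw [← pow_add] at hc2
  by_cases hk : k ≤ m
  · exact hc2.trans (key _ (by omega))
  · rcases Nat.eq_zero_or_pos m with rfl | hm0
    · exact hc2.trans (key _ (by omega))
    · have : PC Fq m k = ∅ := by
        rw [Finset.eq_empty_iff_forall_notMem]
        intro C hC
        rw [PC, Finset.mem_filter, mem_fs, mem_Sec1] at hC
        obtain ⟨⟨h0, h1⟩, hp⟩ := hC
        have hz := eq_zero_of_neg (by omega) h1
        obtain ⟨P, hP⟩ := exists_zeroZ h0 (by omega)
        exact hp P ⟨hP, by rw [hz, map_zero]⟩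
      rw [this]
      simp only [Finset.card_empty, Nat.cast_zero, zero_mul]
      positivity

theorem err_D {ℓ k : ℕ} (D : Finset (P1Pt Fq)) (h3 : 3 * k ≤ ℓ) (hD : degD D + 5 * k ≤ 2 * ℓ) :
    |∑ s ∈ fs (Sec Fq 3 ℓ k), ∏ P ∈ D, (rP P s : ℝ) -
      (∏ P ∈ D, (qq Fq ^ P.deg + 1)) * qq Fq ^ (4 * ℓ + 4 - 6 * k - degD D)| ≤
    2 * qq Fq ^ (3 * ℓ - 3 * k + 5) * 2 ^ D.card := by
  have hq := qq_pos (Fq := Fq)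
  have hcount : (∏ P ∈ D, (qq Fq ^ P.deg + 1)) * qq Fq ^ (4 * ℓ + 4 - 6 * k - degD D) =
      ∑ σ : (P : ↥D) → Option (P1Pt.Res P.1), qq Fq ^ (4 * ℓ + 4 - 6 * k - degD D) := by
    rw [Finset.sum_const, nsmul_eq_mul, Finset.card_univ, Fintype.card_pi]
    congr 1
    push_cast
    rw [← Finset.prod_coe_sort]
    refine Finset.prod_congr rfl fun P _ => ?_
    rw [Fintype.card_option]; push_cast; rw [card_res]
  rw [sum_rD, hcount, ← Finset.sum_sub_distrib]
  refine (Finset.abs_sum_le_sum_abs _ _).trans ?_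
  refine (Finset.sum_le_sum fun σ _ => err_sigma D h3 hD σ).trans ?_
  rw [Finset.sum_comm]
  have hstep : ∀ m ∈ Finset.range (ℓ - 2 * k + 1),
      ∑ σ : (P : ↥D) → Option (P1Pt.Res P.1), ∑ C ∈ PC Fq m k,
      qq Fq ^ (3 * (ℓ - m - k + 1)) * ∏ P : ↥D, wt C P.1 (σ P) ≤
      (qq Fq ^ (3 * ℓ - 3 * k + 5) * 2 ^ D.card) * (1 / 2) ^ m := by
    intro m hm
    rw [Finset.mem_range] at hm
    rw [Finset.sum_comm]
    calc _ ≤ ∑ C ∈ PC Fq m k, qq Fq ^ (3 * (ℓ - m - k + 1)) * 2 ^ D.card := by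
          refine Finset.sum_le_sum fun C hC => ?_
          rw [← Finset.mul_sum]
          refine mul_le_mul_of_nonneg_left (sum_prod_wt ?_ D) (pow_pos hq _).le
          rw [PC, Finset.mem_filter] at hC
          exact hC.2
      _ = ((PC Fq m k).card * qq Fq ^ (3 * (ℓ - m - k + 1))) * 2 ^ D.card := by
          rw [Finset.sum_const, nsmul_eq_mul]; ring
      _ ≤ (qq Fq ^ (3 * ℓ - 3 * k + 5) * (1 / 2) ^ m) * 2 ^ D.card :=
          mul_le_mul_of_nonneg_right (card_PC (by omega)) (by positivity)
      _ = _ := by ring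
  refine (Finset.sum_le_sum hstep).trans ?_
  rw [← Finset.mul_sum]
  have := sum_geometric_two_le (ℓ - 2 * k + 1)
  have h5 : 0 ≤ qq Fq ^ (3 * ℓ - 3 * k + 5) * 2 ^ D.card := by positivity
  calc _ ≤ (qq Fq ^ (3 * ℓ - 3 * k + 5) * 2 ^ D.card) * 2 := mul_le_mul_of_nonneg_left this h5
    _ = _ := by ring

theorem main_sum {ℓ k : ℕ} (D : Finset (P1Pt Fq)) (h3 : 3 * k ≤ ℓ)
    (hD : degD D + 5 * k ≤ 2 * ℓ) :
    |∑ s ∈ fs (Sec Fq 3 ℓ k), (aD D s : ℝ) - qq Fq ^ (4 * ℓ + 4 - 6 * k - degD D)| ≤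
    2 * qq Fq ^ (3 * ℓ - 3 * k + 5) * 3 ^ D.card := by
  have hq := qq_pos (Fq := Fq)
  have e1 : ∑ s ∈ fs (Sec Fq 3 ℓ k), (aD D s : ℝ) = ∑ T ∈ D.powerset,
      (∏ P ∈ D \ T, (-1 : ℝ)) * ∑ s ∈ fs (Sec Fq 3 ℓ k), ∏ P ∈ T, (rP P s : ℝ) := by
    have : ∀ s, (aD D s : ℝ) = ∑ T ∈ D.powerset,
        (∏ P ∈ D \ T, (-1 : ℝ)) * ∏ P ∈ T, (rP P s : ℝ) := by
      intro s
      rw [aD]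
      push_cast
      simp only [sub_eq_add_neg]
      rw [Finset.prod_add]
      exact Finset.sum_congr rfl fun T _ => mul_comm _ _
    simp only [this]
    rw [Finset.sum_comm]
    exact Finset.sum_congr rfl fun T _ => by rw [Finset.mul_sum]
  have hsub : ∀ T ∈ D.powerset, degD T ≤ degD D := fun T hT =>
    Finset.sum_le_sum_of_subset (Finset.mem_powerset.1 hT)
  have e2 : qq Fq ^ (4 * ℓ + 4 - 6 * k - degD D) = ∑ T ∈ D.powerset,
      (∏ P ∈ D \ T, (-1 : ℝ)) *
        ((∏ P ∈ T, (qq Fq ^ P.deg + 1)) * qq Fq ^ (4 * ℓ + 4 - 6 * k - degD T)) := by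
    have hsplit : ∀ T ∈ D.powerset, qq Fq ^ (4 * ℓ + 4 - 6 * k - degD T) =
        qq Fq ^ (4 * ℓ + 4 - 6 * k) * ∏ P ∈ T, (qq Fq ^ P.deg)⁻¹ := by
      intro T hT
      have := hsub T hT
      rw [Finset.prod_inv_distrib, pow_degD, pow_sub₀ _ hq.ne' (by omega)]
    have hD' := hsplit D (Finset.mem_powerset_self D)
    have : ∏ P ∈ D, (qq Fq ^ P.deg)⁻¹ =
        ∏ P ∈ D, ((qq Fq ^ P.deg + 1) * (qq Fq ^ P.deg)⁻¹ + (-1)) := by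
      refine Finset.prod_congr rfl fun P _ => ?_
      have : qq Fq ^ P.deg ≠ 0 := (pow_pos hq _).ne'
      field_simp
      ring
    rw [hD', this, Finset.prod_add, Finset.mul_sum]
    refine Finset.sum_congr rfl fun T hT => ?_
    rw [hsplit T hT, Finset.prod_mul_distrib]
    ring
  rw [e1, e2, ← Finset.sum_sub_distrib]
  refine (Finset.abs_sum_le_sum_abs _ _).trans ?_
  have hstep : ∀ T ∈ D.powerset, |(∏ P ∈ D \ T, (-1 : ℝ)) *
      ∑ s ∈ fs (Sec Fq 3 ℓ k), ∏ P ∈ T, (rP P s : ℝ) - (∏ P ∈ D \ T, (-1 : ℝ)) *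
        ((∏ P ∈ T, (qq Fq ^ P.deg + 1)) * qq Fq ^ (4 * ℓ + 4 - 6 * k - degD T))| ≤
      2 * qq Fq ^ (3 * ℓ - 3 * k + 5) * ((∏ P ∈ T, (2 : ℝ)) * ∏ P ∈ D \ T, (1 : ℝ)) := by
    intro T hT
    have := hsub T hT
    rw [← mul_sub, abs_mul, Finset.abs_prod]
    simp only [abs_neg, abs_one, Finset.prod_const_one, one_mul, mul_one, Finset.prod_const]
    exact err_D T h3 (by omega)
  refine (Finset.sum_le_sum hstep).trans ?_
  rw [← Finset.mul_sum, ← Finset.prod_add, Finset.prod_const]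
  norm_num


/-- the excess weight of a form at a point where it vanishes identically -/
def pw {n : ℕ} (P : P1Pt Fq) (s : Fin n → RR Fq) : ℝ :=
  if ∀ i, ev P (s i) = 0 then qq Fq ^ P.deg else 0

theorem pw_nonneg {n : ℕ} (P : P1Pt Fq) (s : Fin n → RR Fq) : 0 ≤ pw P s := by
  have := qq_pos (Fq := Fq)
  unfold pw; split_ifs <;> positivity

theorem cubic_roots {R : Type} [CommRing R] [IsDomain R] [Fintype R] (a b c d : R)
    (h : ¬ (a = 0 ∧ b = 0 ∧ c = 0 ∧ d = 0)) :
    Nat.card {z : R // a * z ^ 3 + b * z ^ 2 + c * z + d = 0} + (if a = 0 then 1 else 0) ≤ 3 := by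
  set p : Polynomial R := Polynomial.C a * Polynomial.X ^ 3 + Polynomial.C b * Polynomial.X ^ 2
    + Polynomial.C c * Polynomial.X + Polynomial.C d with hp
  have hp0 : p ≠ 0 := by
    intro h0
    apply h
    have e3 : p.coeff 3 = a := by
      simp [hp, Polynomial.coeff_X, Polynomial.coeff_C, Polynomial.coeff_X_pow]
    have e2 : p.coeff 2 = b := by
      simp [hp, Polynomial.coeff_X, Polynomial.coeff_C, Polynomial.coeff_X_pow]
    have e1 : p.coeff 1 = c := by
      simp [hp, Polynomial.coeff_X, Polynomial.coeff_C, Polynomial.coeff_X_pow]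
    have e0 : p.coeff 0 = d := by
      simp [hp, Polynomial.coeff_X, Polynomial.coeff_C, Polynomial.coeff_X_pow]
    rw [h0, Polynomial.coeff_zero] at e3 e2 e1 e0
    exact ⟨e3.symm, e2.symm, e1.symm, e0.symm⟩
  have hc : Nat.card {z : R // a * z ^ 3 + b * z ^ 2 + c * z + d = 0} ≤ p.natDegree := by
    rw [Nat.card_eq_fintype_card, Fintype.card_subtype]
    refine le_trans (Finset.card_le_card (t := p.roots.toFinset) ?_)
      ((Multiset.toFinset_card_le _).trans (Polynomial.card_roots' p))
    intro z hz
    rw [Finset.mem_filter] at hz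
    rw [Multiset.mem_toFinset, Polynomial.mem_roots hp0, Polynomial.IsRoot, hp]
    simpa using hz.2
  split_ifs with ha
  · have : p.natDegree ≤ 2 := by
      rw [hp, ha, Polynomial.C_0, zero_mul, zero_add]
      exact Polynomial.natDegree_quadratic_le
    omega
  · have : p.natDegree ≤ 3 := Polynomial.natDegree_cubic_le
    omega

theorem rP_bound (P : P1Pt Fq) (s : Fin 4 → RR Fq) : |(rP P s : ℝ) - 1| ≤ 2 + pw P s := by
  have h0 : (0 : ℝ) ≤ rP P s := Nat.cast_nonneg _
  have hpw := pw_nonneg P s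
  rw [abs_le]
  refine ⟨by linarith, ?_⟩
  by_cases h : ∀ i, ev P (s i) = 0
  · have h1 : rP P s ≤ Fintype.card P.Res + 1 := by
      unfold rP
      refine add_le_add ?_ (by split_ifs <;> omega)
      rw [Nat.card_eq_fintype_card]
      exact Fintype.card_subtype_le _
    have h2 : (rP P s : ℝ) ≤ qq Fq ^ P.deg + 1 := by
      rw [← card_res]; exact_mod_cast h1
    rw [pw, if_pos h]
    linarith
  · have h1 : rP P s ≤ 3 := by
      unfold rP
      simp only [resEval_eq]
      have := cubic_roots (ev P (s 0)) (ev P (s 1)) (ev P (s 2)) (ev P (s 3)) (by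
        rintro ⟨h0, h1, h2, h3⟩
        apply h
        intro i
        fin_cases i <;> assumption)
      convert this using 2
      split_ifs <;> simp [*]
    have h2 : (rP P s : ℝ) ≤ 3 := by exact_mod_cast h1
    linarith

theorem aD_bound (D : Finset (P1Pt Fq)) (s : Fin 4 → RR Fq) :
    |(aD D s : ℝ)| ≤ ∏ P ∈ D, (2 + pw P s) := by
  rw [aD]
  push_cast
  rw [Finset.abs_prod]
  exact Finset.prod_le_prod (fun _ _ => abs_nonneg _) (fun P _ => rP_bound P s)

instance KKFin (n : ℤ) (T : Finset (P1Pt Fq)) : Module.Finite Fq (KK n T) :=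
  Submodule.finiteDimensional_of_le (S₂ := H Fq n) (fun _ hf => hf.1)

theorem count_T (m : ℕ) (b : ℤ) (k : ℕ) (T : Finset (P1Pt Fq)) :
    (((fs (Sec Fq m b k)).filter (fun B => B ≠ 0 ∧ ∀ P ∈ T, ∀ i, ev P (B i) = 0)).card : ℝ) *
      qq Fq ^ degD T ≤ qq Fq ^ Module.finrank Fq (Sec Fq m b k) := by
  have hq := qq_pos (Fq := Fq)
  rcases Finset.eq_empty_or_nonempty
    ((fs (Sec Fq m b k)).filter (fun B => B ≠ 0 ∧ ∀ P ∈ T, ∀ i, ev P (B i) = 0)) with he | ⟨B, hB⟩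
  · rw [he]; simp; positivity
  · rw [Finset.mem_filter, mem_fs, mem_Sec] at hB
    obtain ⟨hB, hB0, hBT⟩ := hB
    obtain ⟨i, hi⟩ := Function.ne_iff.1 hB0
    have hdeg := deg_le_of_vanish (hB i) hi (fun P hP => hBT P hP i)
    have hb : (degD T : ℤ) ≤ b := by
      have : (0 : ℤ) ≤ ((i : ℕ) : ℤ) * k := by positivity
      linarith
    have hfin : Module.Finite Fq (Tup (fun i : Fin (m + 1) => KK (b - ((i : ℕ) : ℤ) * k) T)) :=
      finite_Tup _
    have hc : ((fs (Sec Fq m b k)).filter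
        (fun B => B ≠ 0 ∧ ∀ P ∈ T, ∀ i, ev P (B i) = 0)).card ≤
        (fs (Tup (fun i : Fin (m + 1) => KK (b - ((i : ℕ) : ℤ) * k) T))).card := by
      refine Finset.card_le_card fun E hE => ?_
      rw [Finset.mem_filter, mem_fs, mem_Sec] at hE
      rw [mem_fs, mem_Tup]
      exact fun i => ⟨hE.1 i, fun P hP => hE.2.2 P hP i⟩
    have hc' : (((fs (Sec Fq m b k)).filter
        (fun B => B ≠ 0 ∧ ∀ P ∈ T, ∀ i, ev P (B i) = 0)).card : ℝ) ≤
        ((fs (Tup (fun i : Fin (m + 1) => KK (b - ((i : ℕ) : ℤ) * k) T))).card : ℝ) := by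
      exact_mod_cast hc
    rw [card_fs] at hc'
    refine (mul_le_mul_of_nonneg_right hc' (pow_pos hq _).le).trans ?_
    rw [← pow_add]
    refine pow_le_pow_right₀ qq_one ?_
    rw [finrank_Tup, finrank_Sec]
    simp only [finrank_KK]
    rw [Fin.sum_univ_succ, Fin.sum_univ_succ]
    have : ∑ i : Fin m, (b - ((i.succ : Fin (m + 1)) : ℕ) * k + 1 - degD T).toNat ≤
        ∑ i : Fin m, (b - ((i.succ : Fin (m + 1)) : ℕ) * k + 1).toNat :=
      Finset.sum_le_sum fun i _ => Int.toNat_le_toNat (by omega)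
    have h0 : (b - ((0 : Fin (m + 1)) : ℕ) * k + 1 - degD T).toNat + degD T ≤
        (b - ((0 : Fin (m + 1)) : ℕ) * k + 1).toNat := by
      simp only [Fin.val_zero, Nat.cast_zero, zero_mul]
      omega
    omega

/-- weight of identical vanishing on T -/
def indT {m : ℕ} (T : Finset (P1Pt Fq)) (B : Fin (m + 1) → RR Fq) : ℝ :=
  if (∀ P ∈ T, ∀ i, ev P (B i) = 0) then qq Fq ^ degD T else 0

theorem prod_pw {m : ℕ} (r : ℝ) (D : Finset (P1Pt Fq)) (B : Fin (m + 1) → RR Fq) :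
    ∏ P ∈ D, (r + pw P B) = ∑ T ∈ D.powerset,
      (∏ P ∈ D \ T, r) * indT T B := by
  simp only [add_comm r]
  rw [Finset.prod_add]
  refine Finset.sum_congr rfl fun T _ => ?_
  rw [mul_comm]
  congr 1
  unfold pw indT
  rw [Finset.prod_ite_zero, pow_degD]

theorem sum_ind (m : ℕ) (b : ℤ) (k : ℕ) (T : Finset (P1Pt Fq)) :
    ∑ B ∈ (fs (Sec Fq m b k)).filter (fun B => B ≠ 0),
      indT T B ≤ qq Fq ^ Module.finrank Fq (Sec Fq m b k) := by
  refine le_of_eq_of_le ?_ (count_T m b k T)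
  unfold indT
  rw [← Finset.sum_filter, Finset.filter_filter, Finset.sum_const, nsmul_eq_mul]

theorem sum_pw (m : ℕ) (b : ℤ) (k : ℕ) (r : ℝ) (hr : 0 ≤ r) (D : Finset (P1Pt Fq)) :
    ∑ B ∈ (fs (Sec Fq m b k)).filter (fun B => B ≠ 0), ∏ P ∈ D, (r + pw P B) ≤
      (r + 1) ^ D.card * qq Fq ^ Module.finrank Fq (Sec Fq m b k) := by
  have e1 : (r + 1) ^ D.card = ∑ T ∈ D.powerset, ∏ P ∈ D \ T, r := by
    have := Finset.prod_add (fun _ : P1Pt Fq => (1 : ℝ)) (fun _ => r) D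
    simp only [Finset.prod_const_one, one_mul] at this
    rw [← this, Finset.prod_const, add_comm 1 r]
  rw [Finset.sum_congr rfl (fun B _ => prod_pw r D B), Finset.sum_comm, e1, Finset.sum_mul]
  refine Finset.sum_le_sum fun T _ => ?_
  rw [← Finset.mul_sum]
  exact mul_le_mul_of_nonneg_left (sum_ind m b k T) (Finset.prod_nonneg fun _ _ => hr)

theorem gauss (P : P1Pt Fq) (B : Fin 3 → RR Fq) (C : Fin 2 → RR Fq)
    (h : ∀ i, ev P (mulBC C B i) = 0) : (∀ i, ev P (B i) = 0) ∨ (∀ i, ev P (C i) = 0) := by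
  have h0 : ev P (B 0) * ev P (C 0) = 0 := by simpa [mulBC] using h 0
  have h1 : ev P (B 0) * ev P (C 1) + ev P (B 1) * ev P (C 0) = 0 := by simpa [mulBC] using h 1
  have h2 : ev P (B 1) * ev P (C 1) + ev P (B 2) * ev P (C 0) = 0 := by simpa [mulBC] using h 2
  have h3 : ev P (B 2) * ev P (C 1) = 0 := by simpa [mulBC] using h 3
  by_cases hc0 : ev P (C 0) = 0
  · by_cases hc1 : ev P (C 1) = 0
    · right; intro i; fin_cases i <;> assumption
    · left
      simp only [hc0, mul_zero, add_zero, mul_eq_zero, hc1, or_false] at h1 h2 h3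
      intro i; fin_cases i <;> assumption
  · left
    have b0 : ev P (B 0) = 0 := by simpa [hc0] using h0
    have b1 : ev P (B 1) = 0 := by simpa [hc0, b0] using h1
    have b2 : ev P (B 2) = 0 := by simpa [hc0, b1] using h2
    intro i; fin_cases i <;> assumption

theorem pw_mul (P : P1Pt Fq) (B : Fin 3 → RR Fq) (C : Fin 2 → RR Fq) :
    2 + pw P (mulBC C B) ≤ (2 + pw P B) * (1 + pw P C) := by
  have hb := pw_nonneg P B
  have hc := pw_nonneg P C
  have hq : (0 : ℝ) < qq Fq ^ P.deg := pow_pos qq_pos _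
  have key : pw P (mulBC C B) ≤ pw P B + pw P C := by
    by_cases h : ∀ i, ev P (mulBC C B i) = 0
    · rw [show pw P (mulBC C B) = qq Fq ^ P.deg from if_pos h]
      rcases gauss P B C h with h' | h'
      · rw [show pw P B = qq Fq ^ P.deg from if_pos h']; linarith
      · rw [show pw P C = qq Fq ^ P.deg from if_pos h']; linarith
    · rw [show pw P (mulBC C B) = 0 from if_neg h]; linarith
  nlinarith [mul_nonneg hb hc]

theorem red_cases {ℓ k : ℕ} {s : Fin 4 → RR Fq} (hs : s ∈ Sec Fq 3 ℓ k) (h : HorizRed k s) :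
    s = 0 ∨ (∃ t ∈ Sec Fq 2 ℓ k, t ≠ 0 ∧ s = ![t 0, t 1, t 2, 0]) ∨
    ∃ c : ℕ, k ≤ c ∧ c + 2 * k ≤ ℓ ∧ ∃ B ∈ Sec Fq 2 ((ℓ : ℤ) - c) k, ∃ C ∈ Sec Fq 1 c k,
      B ≠ 0 ∧ C ≠ 0 ∧ s = mulBC C B := by
  by_cases h0 : s = 0
  · exact Or.inl h0
  right
  rw [mem_Sec3] at hs
  by_cases h3 : s 3 = 0
  · left
    have e : s = ![s 0, s 1, s 2, 0] := by
      funext i; fin_cases i <;> simp [h3]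
    refine ⟨![s 0, s 1, s 2], ?_, ?_, ?_⟩
    · rw [mem_Sec2]; exact ⟨hs.1, hs.2.1, hs.2.2.1⟩
    · intro h
      apply h0
      have a0 := congrFun h 0
      have a1 := congrFun h 1
      have a2 := congrFun h 2
      simp at a0 a1 a2
      rw [e, a0, a1, a2]
      funext i; fin_cases i <;> rfl
    · simpa using e
  · right
    rcases h with h | ⟨b, c, B, C, hB, hC, hBd, hCd, e0, e1, e2, e3⟩
    · exact absurd h h0
    · have hB' : B ∈ Sec Fq 2 b k := hBd
      have hC' : C ∈ Sec Fq 1 c k := hCd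
      have hB2 := mem_Sec2.1 hB'
      have hC2 := mem_Sec1.1 hC'
      rw [e3] at h3
      have hb2 : B 2 ≠ 0 := left_ne_zero_of_mul h3
      have hc1 : C 1 ≠ 0 := right_ne_zero_of_mul h3
      have n1 := nonneg_of_ne hB2.2.2 hb2
      have n2 := nonneg_of_ne hC2.2 hc1
      have hd := degree_unique (mul_mem_H hB2.2.2 hC2.2) (e3 ▸ hs.2.2.2) h3
      lift c to ℕ using (by omega)
      refine ⟨c, by omega, by omega, B, ?_, C, hC', hB, hC, ?_⟩
      · rw [show (ℓ : ℤ) - c = b by omega]; exact hB'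
      · funext i
        fin_cases i
        · exact e0
        · exact e1
        · exact e2
        · exact e3


theorem sum_cover {α ι : Type} (S : Finset α) (T : Finset ι) (φ : ι → α) (f : α → ℝ)
    (hf : ∀ a, 0 ≤ f a) (h : S ⊆ T.image φ) : ∑ s ∈ S, f s ≤ ∑ t ∈ T, f (φ t) :=
  (Finset.sum_le_sum_of_subset_of_nonneg h fun a _ _ => hf a).trans
    (Finset.sum_image_le_of_nonneg fun a _ => hf a)

theorem sum_union3 {α : Type} (S A B C : Finset α) (f : α → ℝ)
    (hf : ∀ a, 0 ≤ f a) (h : S ⊆ A ∪ (B ∪ C)) :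
    ∑ s ∈ S, f s ≤ ∑ s ∈ A, f s + (∑ s ∈ B, f s + ∑ s ∈ C, f s) := by
  have h1 := Finset.sum_union_inter (s₁ := A) (s₂ := B ∪ C) (f := f)
  have h2 := Finset.sum_union_inter (s₁ := B) (s₂ := C) (f := f)
  have h3 : 0 ≤ ∑ s ∈ A ∩ (B ∪ C), f s := Finset.sum_nonneg fun a _ => hf a
  have h4 : 0 ≤ ∑ s ∈ B ∩ C, f s := Finset.sum_nonneg fun a _ => hf a
  have h5 : ∑ s ∈ S, f s ≤ ∑ s ∈ A ∪ (B ∪ C), f s :=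
    Finset.sum_le_sum_of_subset_of_nonneg h fun a _ _ => hf a
  linarith

theorem sum_cover3 {α ι κ : Type} (S : Finset α) (a : α) (T : Finset ι) (φ : ι → α)
    (U : Finset κ) (ψ : κ → α) (f : α → ℝ) (hf : ∀ a, 0 ≤ f a)
    (h : ∀ s ∈ S, s = a ∨ (∃ t ∈ T, φ t = s) ∨ ∃ u ∈ U, ψ u = s) :
    ∑ s ∈ S, f s ≤ f a + (∑ t ∈ T, f (φ t) + ∑ u ∈ U, f (ψ u)) := by
  have h1 := sum_union3 S {a} (T.image φ) (U.image ψ) f hf (by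
    intro s hs
    rw [Finset.mem_union, Finset.mem_union, Finset.mem_singleton, Finset.mem_image,
      Finset.mem_image]
    exact h s hs)
  rw [Finset.sum_singleton] at h1
  have h2 := sum_cover (T.image φ) T φ f hf (Finset.Subset.refl _)
  have h3 := sum_cover (U.image ψ) U ψ f hf (Finset.Subset.refl _)
  linarith

/-- weight majorising the root count -/
def ff (D : Finset (P1Pt Fq)) (s : Fin 4 → RR Fq) : ℝ := ∏ P ∈ D, (2 + pw P s)

theorem ff_nonneg (D : Finset (P1Pt Fq)) (s : Fin 4 → RR Fq) : 0 ≤ ff D s :=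
  Finset.prod_nonneg fun P _ => by have := pw_nonneg P s; linarith

/-- nonzero sections -/
def NZ (Fq : Type) [Field Fq] [Fintype Fq] (m : ℕ) (b : ℤ) (k : ℕ) :
    Finset (Fin (m + 1) → RR Fq) := (fs (Sec Fq m b k)).filter (fun B => B ≠ 0)

theorem mem_NZ {m : ℕ} {b : ℤ} {k : ℕ} {B : Fin (m + 1) → RR Fq} :
    B ∈ NZ Fq m b k ↔ B ∈ Sec Fq m b k ∧ B ≠ 0 := by
  rw [NZ, Finset.mem_filter, mem_fs]

theorem ff_zero (D : Finset (P1Pt Fq)) : ff D 0 ≤ 3 ^ D.card * qq Fq ^ degD D := by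
  unfold ff
  rw [← pow_degD, ← Finset.prod_const, ← Finset.prod_mul_distrib]
  refine Finset.prod_le_prod (fun P _ => by have := pw_nonneg P (0 : Fin 4 → RR Fq); linarith)
    fun P _ => ?_
  have h1 : (1 : ℝ) ≤ qq Fq ^ P.deg := one_le_pow₀ qq_one
  have : pw P (0 : Fin 4 → RR Fq) = qq Fq ^ P.deg := if_pos (fun i => by simp)
  rw [this]; linarith

theorem ff_three (ℓ k : ℕ) (h3 : 3 * k ≤ ℓ) (D : Finset (P1Pt Fq)) :
    ∑ t ∈ NZ Fq 2 ℓ k, ff D ![t 0, t 1, t 2, 0] ≤ 3 ^ D.card * qq Fq ^ (3 * ℓ - 3 * k + 3) := by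
  have h := sum_pw 2 ℓ k 2 (by norm_num) D
  rw [finrank_Sec2, show (2 : ℝ) + 1 = 3 by norm_num, show ((ℓ : ℤ) + 1).toNat +
    (((ℓ : ℤ) - k + 1).toNat + ((ℓ : ℤ) - 2 * k + 1).toNat) = 3 * ℓ - 3 * k + 3 by omega] at h
  refine le_trans (Finset.sum_le_sum fun t _ => ?_) h
  unfold ff
  refine Finset.prod_le_prod (fun P _ => by
    have := pw_nonneg P ![t 0, t 1, t 2, 0]; linarith) fun P _ => ?_
  have hq : (0 : ℝ) < qq Fq ^ P.deg := pow_pos qq_pos _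
  have hn := pw_nonneg P t
  by_cases h' : ∀ i, ev P (![t 0, t 1, t 2, 0] i) = 0
  · have : pw P t = qq Fq ^ P.deg := if_pos (fun i => by
      have h0 := h' 0
      have h1 := h' 1
      have h2 := h' 2
      fin_cases i
      · exact h0
      · exact h1
      · exact h2)
    rw [this, show pw P ![t 0, t 1, t 2, 0] = qq Fq ^ P.deg from if_pos h']
  · rw [show pw P ![t 0, t 1, t 2, 0] = 0 from if_neg h']; linarith

theorem ff_mul (ℓ k c : ℕ) (h3 : 3 * k ≤ ℓ) (hkc : k ≤ c) (hc : c + 2 * k ≤ ℓ)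
    (D : Finset (P1Pt Fq)) :
    ∑ x ∈ NZ Fq 2 ((ℓ : ℤ) - c) k ×ˢ NZ Fq 1 c k, ff D (mulBC x.2 x.1) ≤
      (6 ^ D.card * qq Fq ^ (3 * ℓ - 3 * k + 5)) * (1 / 2) ^ c := by
  have hq := qq_pos (Fq := Fq)
  have h1 := sum_pw 2 ((ℓ : ℤ) - c) k 2 (by norm_num) D
  have h2 := sum_pw 1 (c : ℤ) k 1 (by norm_num) D
  rw [finrank_Sec2] at h1
  rw [finrank_Sec1] at h2
  have hle : ∀ x ∈ NZ Fq 2 ((ℓ : ℤ) - c) k ×ˢ NZ Fq 1 c k, ff D (mulBC x.2 x.1) ≤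
      (∏ P ∈ D, (2 + pw P x.1)) * ∏ P ∈ D, (1 + pw P x.2) := by
    intro x _
    unfold ff
    rw [← Finset.prod_mul_distrib]
    exact Finset.prod_le_prod (fun P _ => by
      have := pw_nonneg P (mulBC x.2 x.1); linarith) fun P _ => pw_mul P x.1 x.2
  refine (Finset.sum_le_sum hle).trans ?_
  rw [Finset.sum_product]
  dsimp only
  rw [← Finset.sum_mul_sum]
  have hn : 0 ≤ ∑ B ∈ NZ Fq 1 c k, ∏ P ∈ D, (1 + pw P B) :=
    Finset.sum_nonneg fun B _ => Finset.prod_nonneg fun P _ => by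
      have := pw_nonneg P B; linarith
  refine (mul_le_mul h1 h2 hn (by positivity)).trans ?_
  have e : (2 + 1 : ℝ) ^ D.card * (1 + 1) ^ D.card = 6 ^ D.card := by
    rw [← mul_pow]; norm_num
  rw [mul_mul_mul_comm, e, mul_assoc]
  refine mul_le_mul_of_nonneg_left ?_ (by positivity)
  rw [← pow_add]
  have e2 : (3 * ℓ - 3 * k + 5) = (3 * ℓ - 3 * k + 5 - c) + c := by omega
  rw [e2, pow_add (qq Fq) (3 * ℓ - 3 * k + 5 - c) c, mul_assoc, ← mul_pow]
  have h4 : (1 : ℝ) ≤ (qq Fq * (1 / 2)) ^ c :=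
    one_le_pow₀ (by have := qq_ge (Fq := Fq); linarith)
  refine le_trans (pow_le_pow_right₀ qq_one (n := 3 * ℓ - 3 * k + 5 - c) (by omega)) ?_
  have h5 := pow_pos hq (3 * ℓ - 3 * k + 5 - c)
  nlinarith

/-- index set of the products -/
def IX (Fq : Type) [Field Fq] [Fintype Fq] (ℓ k : ℕ) :
    Finset (Σ _ : ℕ, (Fin 3 → RR Fq) × (Fin 2 → RR Fq)) :=
  ((Finset.range (ℓ - 2 * k + 1)).filter (fun c => k ≤ c)).sigma
    (fun c => NZ Fq 2 ((ℓ : ℤ) - c) k ×ˢ NZ Fq 1 c k)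

theorem mem_IX {ℓ k c : ℕ} {B : Fin 3 → RR Fq} {C : Fin 2 → RR Fq} :
    (⟨c, (B, C)⟩ : Σ _ : ℕ, (Fin 3 → RR Fq) × (Fin 2 → RR Fq)) ∈ IX Fq ℓ k ↔
    ((c < ℓ - 2 * k + 1 ∧ k ≤ c) ∧ B ∈ NZ Fq 2 ((ℓ : ℤ) - c) k ∧ C ∈ NZ Fq 1 c k) := by
  rw [IX, Finset.mem_sigma, Finset.mem_filter, Finset.mem_range, Finset.mem_product]

theorem b2_bound {ℓ k : ℕ} (D : Finset (P1Pt Fq)) (h3 : 3 * k ≤ ℓ) :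
    ∑ x ∈ IX Fq ℓ k, ff D (mulBC x.2.2 x.2.1) ≤
      (6 ^ D.card * qq Fq ^ (3 * ℓ - 3 * k + 5)) * 2 := by
  have hq := qq_pos (Fq := Fq)
  rw [IX, Finset.sum_sigma]
  refine (Finset.sum_le_sum (g := fun c =>
    (6 ^ D.card * qq Fq ^ (3 * ℓ - 3 * k + 5)) * (1 / 2) ^ c) fun c hc => ?_).trans ?_
  · rw [Finset.mem_filter, Finset.mem_range] at hc
    exact ff_mul ℓ k c h3 hc.2 (by omega) D
  · rw [← Finset.mul_sum]
    refine mul_le_mul_of_nonneg_left ?_ (by positivity)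
    exact (Finset.sum_le_sum_of_subset_of_nonneg (Finset.filter_subset _ _)
      (fun _ _ _ => by positivity)).trans (sum_geometric_two_le _)

theorem red_sum {ℓ k : ℕ} (D : Finset (P1Pt Fq)) (h3 : 3 * k ≤ ℓ)
    (hD : degD D + 5 * k ≤ 2 * ℓ) :
    ∑ s ∈ (fs (Sec Fq 3 ℓ k)).filter (fun s => HorizRed k s), |(aD D s : ℝ)| ≤
      4 * (6 ^ D.card * qq Fq ^ (3 * ℓ - 3 * k + 5)) := by
  have hq := qq_pos (Fq := Fq)
  refine (Finset.sum_le_sum (g := ff D) fun s _ => aD_bound D s).trans ?_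
  have hsub : ∀ s ∈ (fs (Sec Fq 3 ℓ k)).filter (fun s => HorizRed k s), s = 0 ∨
      (∃ t ∈ NZ Fq 2 ℓ k, ![t 0, t 1, t 2, 0] = s) ∨
      ∃ x ∈ IX Fq ℓ k, mulBC x.2.2 x.2.1 = s := by
    intro s hs
    rw [Finset.mem_filter, mem_fs] at hs
    rcases red_cases hs.1 hs.2 with h | ⟨t, ht, ht0, h⟩ | ⟨c, hc, hc', B, hB, C, hC, hB0, hC0, h⟩
    · exact Or.inl h
    · exact Or.inr (Or.inl ⟨t, mem_NZ.2 ⟨ht, ht0⟩, h.symm⟩)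
    · refine Or.inr (Or.inr ⟨⟨c, (B, C)⟩, ?_, h.symm⟩)
      rw [mem_IX]
      exact ⟨⟨by omega, hc⟩, mem_NZ.2 ⟨hB, hB0⟩, mem_NZ.2 ⟨hC, hC0⟩⟩
  refine (sum_cover3 _ 0 (NZ Fq 2 ℓ k) (fun t => ![t 0, t 1, t 2, 0]) (IX Fq ℓ k)
    (fun x => mulBC x.2.2 x.2.1) _ (ff_nonneg D) hsub).trans ?_
  have b0 : ff D (0 : Fin 4 → RR Fq) ≤
      6 ^ D.card * qq Fq ^ (3 * ℓ - 3 * k + 5) := by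
    refine (ff_zero D).trans (mul_le_mul ?_ ?_ (by positivity) (by positivity))
    · exact pow_le_pow_left₀ (by norm_num) (by norm_num) _
    · exact pow_le_pow_right₀ qq_one (by omega)
  have b1 : ∑ t ∈ NZ Fq 2 ℓ k, ff D ![t 0, t 1, t 2, 0] ≤
      6 ^ D.card * qq Fq ^ (3 * ℓ - 3 * k + 5) := by
    refine (ff_three ℓ k h3 D).trans (mul_le_mul ?_ ?_ (by positivity) (by positivity))
    · exact pow_le_pow_left₀ (by norm_num) (by norm_num) _
    · exact pow_le_pow_right₀ qq_one (by omega)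
  have b2 := b2_bound (Fq := Fq) D h3
  linarith

theorem phi_eq (ℓ k : ℕ) (D : Finset (P1Pt Fq)) :
    (((∑ᶠ s ∈ {s ∈ SecSet (Fq := Fq) 3 ℓ k | ¬ HorizRed k s}, aD D s : ℤ)) : ℝ) =
      ∑ s ∈ fs (Sec Fq 3 ℓ k), (aD D s : ℝ) -
      ∑ s ∈ (fs (Sec Fq 3 ℓ k)).filter (fun s => HorizRed k s), (aD D s : ℝ) := by
  have e : {s ∈ SecSet (Fq := Fq) 3 ℓ k | ¬ HorizRed k s} =
      (((fs (Sec Fq 3 ℓ k)).filter (fun s => ¬ HorizRed k s) : Finset _) : Set _) := by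
    ext s
    rw [Finset.mem_coe, Finset.mem_filter, mem_fs]
    rfl
  rw [e, finsum_mem_coe_finset]
  push_cast
  rw [eq_sub_iff_add_eq, add_comm, Finset.sum_filter_add_sum_filter_not]

theorem phi_bound {ℓ k : ℕ} (D : Finset (P1Pt Fq)) (h3 : 3 * k ≤ ℓ)
    (hD : degD D + 5 * k ≤ 2 * ℓ) :
    |(((∑ᶠ s ∈ {s ∈ SecSet (Fq := Fq) 3 ℓ k | ¬ HorizRed k s}, aD D s : ℤ)) : ℝ) -
      qq Fq ^ (4 * ℓ + 4 - 6 * k - degD D)| ≤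
      6 * (6 ^ D.card * qq Fq ^ (3 * ℓ - 3 * k + 5)) := by
  have hq := qq_pos (Fq := Fq)
  have h1 := main_sum D h3 hD
  have h2 := (Finset.abs_sum_le_sum_abs _ _).trans (red_sum D h3 hD)
  have h4 : 2 * qq Fq ^ (3 * ℓ - 3 * k + 5) * 3 ^ D.card ≤
      2 * (6 ^ D.card * qq Fq ^ (3 * ℓ - 3 * k + 5)) := by
    have a : (3 : ℝ) ^ D.card ≤ 6 ^ D.card := pow_le_pow_left₀ (by norm_num) (by norm_num) _
    have b := pow_pos hq (3 * ℓ - 3 * k + 5)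
    nlinarith
  rw [phi_eq]
  rw [abs_le] at h1 h2 ⊢
  constructor <;> linarith [h1.1, h1.2, h2.1, h2.2]


end Fin

/-- Let `ℓ, k ≥ 0` and `D` a reduced effective divisor on `P¹`
with `ℓ ≥ 3k` and `ℓ − 2k ≥ (deg D + k)/2` (i.e. `deg D + 5k ≤ 2ℓ`).  Then
`Φ^{ir}(ℓ,k,D) = q^{4ℓ−6k+4−deg D} + O(6^{ω(D)} q^{3ℓ−3k})`, and if in addition
`deg D > ℓ` (the medium range) then `Φ^{ir}(ℓ,k,D) = O(6^{ω(D)} q^{3ℓ−3k})`;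
implied constants depend only on `q`. -/
theorem statement_18 (Fq : Type) [Field Fq] [Fintype Fq] :
    ∃ K : ℕ, 0 < K ∧
      ∀ (ℓ k : ℕ) (D : Finset (P1Pt Fq)), 3 * k ≤ ℓ → degD D + 5 * k ≤ 2 * ℓ →
        (|(∑ᶠ s ∈ {s ∈ SecSet 3 ℓ k | ¬ HorizRed k s}, aD D s) -
              (Fintype.card Fq : ℤ) ^ (4 * ℓ + 4 - 6 * k - degD D)| ≤
            (K : ℤ) * 6 ^ D.card * (Fintype.card Fq : ℤ) ^ (3 * ℓ - 3 * k)) ∧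
        (ℓ < degD D →
          |∑ᶠ s ∈ {s ∈ SecSet 3 ℓ k | ¬ HorizRed k s}, aD D s| ≤
            (K : ℤ) * 6 ^ D.card * (Fintype.card Fq : ℤ) ^ (3 * ℓ - 3 * k)) := by
  refine ⟨7 * Fintype.card Fq ^ 5, by positivity, fun ℓ k D h3 hD => ?_⟩
  have hq := qq_pos (Fq := Fq)
  have h := phi_bound D h3 hD
  set Φ : ℤ := ∑ᶠ s ∈ {s ∈ SecSet (Fq := Fq) 3 ℓ k | ¬ HorizRed k s}, aD D s
  have e : ((((7 * Fintype.card Fq ^ 5 : ℕ) : ℤ) * 6 ^ D.card *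
      (Fintype.card Fq : ℤ) ^ (3 * ℓ - 3 * k) : ℤ) : ℝ) =
      7 * (6 ^ D.card * qq Fq ^ (3 * ℓ - 3 * k + 5)) := by
    push_cast
    rw [qq, pow_add]
    ring
  have hp : 0 < 6 ^ D.card * qq Fq ^ (3 * ℓ - 3 * k + 5) := by positivity
  constructor
  · rw [← Int.cast_le (R := ℝ), e]
    push_cast
    rw [qq] at h hp ⊢
    linarith
  · intro hl
    rw [← Int.cast_le (R := ℝ), e]
    push_cast
    have h5 : qq Fq ^ (4 * ℓ + 4 - 6 * k - degD D) ≤ 6 ^ D.card * qq Fq ^ (3 * ℓ - 3 * k + 5) := by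
      have a : qq Fq ^ (4 * ℓ + 4 - 6 * k - degD D) ≤ qq Fq ^ (3 * ℓ - 3 * k + 5) :=
        pow_le_pow_right₀ qq_one (by omega)
      have b : (1 : ℝ) ≤ 6 ^ D.card := one_le_pow₀ (by norm_num)
      have c := pow_pos hq (3 * ℓ - 3 * k + 5)
      nlinarith
    have h6 := pow_pos hq (4 * ℓ + 4 - 6 * k - degD D)
    rw [abs_le] at h ⊢
    constructor <;> linarith [h.1, h.2]

end Stmt18
end
end
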